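/- Assume f ∈ L^∞(Ω), u ∈ H²(Ω), and let ρ₀ ≥ 1. There exists a constant C > 0 (depending on Ω, a, b, c, u, f and ρ₀) such that for all N and all meshes X, X̃ ∈ S_N with ‖X − X̃‖_∞ < 1/(ρ₀ N), the corresponding finite element solutions u_h and u_{h̃} satisfy: ‖(u_h − u_{h̃})'‖_{L¹(Ω)} ≤ C N ‖X − X̃‖_∞, ‖u_h − u_{h̃}‖_Ω ≤ C N^{−1/2} ‖X − X̃‖_∞^{1/2}, and | ‖u_h‖_E² − ‖u_{h̃}‖_E² | ≤ C N^{−1/2} ‖X − X̃‖_∞^{1/2}, where ‖v‖_E² = ∫₀¹ ( a v'² + (c − b'/2) v² ) dx. -/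

import Mathlib

/-!
Setting of Huang–He, "Error analysis for equidistributing meshes":
the boundary value problem  −(a u')' + b u' + c u = f on Ω = (0,1), u(0)=u(1)=0,
its linear finite element discretization on a mesh 0 = x₀ < ⋯ < x_N = 1,
and the residual-based equidistribution quantities.
-/

noncomputable section
open MeasureTheory Real

namespace EquidMesh

/-- L² norm on (0,1). -/
def L2 (g : ℝ → ℝ) : ℝ := Real.sqrt (∫ t in (0:ℝ)..1, (g t)^2)

/-- L¹ norm on (0,1). -/
def L1 (g : ℝ → ℝ) : ℝ := ∫ t in (0:ℝ)..1, |g t|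

/-- The L^{2/3} quasi-norm on (0,1): (∫₀¹ |g|^{2/3})^{3/2}. -/
def Lp23 (g : ℝ → ℝ) : ℝ := (∫ t in (0:ℝ)..1, |g t| ^ ((2:ℝ)/3)) ^ ((3:ℝ)/2)

/-- L^∞ norm (essential supremum of |g|) on (0,1). -/
def Linf (g : ℝ → ℝ) : ℝ := essSup (fun t => |g t|) (volume.restrict (Set.Ioo (0:ℝ) 1))

/-- Membership in L²(0,1). -/
def MemL2 (g : ℝ → ℝ) : Prop :=
  Measurable g ∧ IntervalIntegrable (fun t => (g t)^2) volume 0 1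

/-- Membership in L^∞(0,1). -/
def MemLinf (g : ℝ → ℝ) : Prop :=
  Measurable g ∧ ∃ M : ℝ, ∀ᵐ x ∂(volume.restrict (Set.Ioo (0:ℝ) 1)), |g x| ≤ M

/-- `g` is absolutely continuous on [0,1] with derivative `g' ∈ L¹(0,1)`. -/
def HasL1Deriv (g g' : ℝ → ℝ) : Prop :=
  Measurable g' ∧ IntervalIntegrable g' volume 0 1 ∧
    ∀ x ∈ Set.Icc (0:ℝ) 1, g x = g 0 + ∫ t in (0:ℝ)..x, g' t

/-- A function in H¹(0,1): absolutely continuous on [0,1], carried together with its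
(a.e.) derivative, which lies in L²(0,1). -/
structure H1 where
  val : ℝ → ℝ
  dval : ℝ → ℝ
  dval_meas : Measurable dval
  dval_int : IntervalIntegrable dval volume 0 1
  dval_sq_int : IntervalIntegrable (fun t => (dval t)^2) volume 0 1
  ftc : ∀ x ∈ Set.Icc (0:ℝ) 1, val x = val 0 + ∫ t in (0:ℝ)..x, dval t

/-- `u ∈ H²(0,1)`: the derivative `u'` is absolutely continuous with `u'' ∈ L²(0,1)`. -/
def H1.IsH2 (u : H1) : Prop :=
  ∃ u'' : ℝ → ℝ, Measurable u'' ∧ IntervalIntegrable u'' volume 0 1 ∧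
    IntervalIntegrable (fun t => (u'' t)^2) volume 0 1 ∧
    ∀ x ∈ Set.Icc (0:ℝ) 1, u.dval x = u.dval 0 + ∫ t in (0:ℝ)..x, u'' t

/-- The coefficients of the elliptic problem on Ω = (0,1):
`a, b ∈ W^{1,∞}(Ω)`, `c ∈ L^∞(Ω)`, `a ≥ a₀ > 0`, and `c − b'/2 ≥ 0` a.e. -/
structure Coeffs where
  a : ℝ → ℝ
  b : ℝ → ℝ
  c : ℝ → ℝ
  a' : ℝ → ℝ
  b' : ℝ → ℝ
  a0 : ℝ
  a0_pos : 0 < a0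
  a_lb : ∀ x ∈ Set.Icc (0:ℝ) 1, a0 ≤ a x
  a'_meas : Measurable a'
  b'_meas : Measurable b'
  c_meas : Measurable c
  a'_int : IntervalIntegrable a' volume 0 1
  b'_int : IntervalIntegrable b' volume 0 1
  a'_bdd : ∃ M : ℝ, ∀ᵐ x ∂(volume.restrict (Set.Ioo (0:ℝ) 1)), |a' x| ≤ M
  b'_bdd : ∃ M : ℝ, ∀ᵐ x ∂(volume.restrict (Set.Ioo (0:ℝ) 1)), |b' x| ≤ M
  c_bdd : ∃ M : ℝ, ∀ᵐ x ∂(volume.restrict (Set.Ioo (0:ℝ) 1)), |c x| ≤ M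
  ftc_a : ∀ x ∈ Set.Icc (0:ℝ) 1, a x = a 0 + ∫ t in (0:ℝ)..x, a' t
  ftc_b : ∀ x ∈ Set.Icc (0:ℝ) 1, b x = b 0 + ∫ t in (0:ℝ)..x, b' t
  cb_nonneg : ∀ᵐ x ∂(volume.restrict (Set.Ioo (0:ℝ) 1)), 0 ≤ c x - b' x / 2

/-- The bilinear form B(u,v) = ∫₀¹ (a u' v' + b u' v + c u v) dx. -/
def Coeffs.B (P : Coeffs) (u v : H1) : ℝ :=
  ∫ t in (0:ℝ)..1,
    (P.a t * u.dval t * v.dval t + P.b t * u.dval t * v.val t + P.c t * u.val t * v.val t)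

/-- The right-hand side functional (f, v) = ∫₀¹ f v dx. -/
def ip (f : ℝ → ℝ) (v : H1) : ℝ := ∫ t in (0:ℝ)..1, f t * v.val t

/-- `u ∈ H¹₀(Ω)` is the weak solution: B(u,v) = (f,v) for all v ∈ H¹₀(Ω). -/
def Coeffs.IsWeakSolution (P : Coeffs) (f : ℝ → ℝ) (u : H1) : Prop :=
  u.val 0 = 0 ∧ u.val 1 = 0 ∧
    ∀ v : H1, v.val 0 = 0 → v.val 1 = 0 → P.B u v = ip f v

/-- A mesh of N elements of Ω = (0,1): 0 = x₀ < x₁ < ⋯ < x_N = 1. -/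
structure Mesh (N : ℕ) where
  x : ℕ → ℝ
  x_zero : x 0 = 0
  x_last : x N = 1
  x_mono : ∀ i < N, x i < x (i+1)

/-- Element length (the element of index `i` is `(x i, x (i+1))`, `0 ≤ i < N`). -/
def Mesh.h {N : ℕ} (m : Mesh N) (i : ℕ) : ℝ := m.x (i+1) - m.x i

/-- `v` is piecewise linear with respect to the mesh: its derivative is constant
inside each element. -/
def Mesh.IsPL {N : ℕ} (m : Mesh N) (v : H1) : Prop :=
  ∀ i < N, ∃ s : ℝ, ∀ t ∈ Set.Ioo (m.x i) (m.x (i+1)), v.dval t = s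

/-- `uh` is the linear finite element solution on the mesh `m`:
a continuous piecewise linear function vanishing at 0 and 1 with
B(u_h, v_h) = (f, v_h) for all piecewise linear v_h vanishing at 0 and 1. -/
def Coeffs.IsFESolution (P : Coeffs) (f : ℝ → ℝ) {N : ℕ} (m : Mesh N) (uh : H1) : Prop :=
  uh.val 0 = 0 ∧ uh.val 1 = 0 ∧ m.IsPL uh ∧
    ∀ v : H1, v.val 0 = 0 → v.val 1 = 0 → m.IsPL v → P.B uh v = ip f v

/-- The residual of `w`: r = f + a' w' − b w' − c w. -/
def Coeffs.res (P : Coeffs) (f : ℝ → ℝ) (w : H1) : ℝ → ℝ :=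
  fun t => f t + P.a' t * w.dval t - P.b t * w.dval t - P.c t * w.val t

/-- The element L² average ⟨g⟩_i = (h_i⁻¹ ∫_{K_i} g²)^{1/2}. -/
def Mesh.avg {N : ℕ} (m : Mesh N) (g : ℝ → ℝ) (i : ℕ) : ℝ :=
  Real.sqrt ((1 / m.h i) * ∫ t in (m.x i)..(m.x (i+1)), (g t)^2)

/-- The intensity parameter α_h = (Σ_i h_i ⟨g⟩_i^{2/3})³. -/
def Mesh.alpha {N : ℕ} (m : Mesh N) (g : ℝ → ℝ) : ℝ :=
  (∑ i ∈ Finset.range N, m.h i * (m.avg g i) ^ ((2:ℝ)/3)) ^ 3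

/-- The adaptation function value ρ_i = (1 + α_h⁻¹ ⟨g⟩_i²)^{1/3}. -/
def Mesh.rho {N : ℕ} (m : Mesh N) (g : ℝ → ℝ) (i : ℕ) : ℝ :=
  (1 + (m.alpha g)⁻¹ * (m.avg g i)^2) ^ ((1:ℝ)/3)

/-- σ_h = Σ_i ρ_i h_i. -/
def Mesh.sigma {N : ℕ} (m : Mesh N) (g : ℝ → ℝ) : ℝ :=
  ∑ i ∈ Finset.range N, m.rho g i * m.h i

/-- The mesh equidistributes (the piecewise constant adaptation function built from) `g`:
ρ_i h_i = σ_h / N for all elements. -/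
def Mesh.IsEquidistributing {N : ℕ} (m : Mesh N) (g : ℝ → ℝ) : Prop :=
  ∀ i < N, m.rho g i * m.h i = m.sigma g / (N:ℝ)

/-- Membership in the mesh set S_N: 1/(ρ₀ N) ≤ h_i ≤ 2/N for all i. -/
def Mesh.InS {N : ℕ} (m : Mesh N) (ρ0 : ℝ) : Prop :=
  ∀ i < N, 1 / (ρ0 * (N:ℝ)) ≤ m.h i ∧ m.h i ≤ 2 / (N:ℝ)

/-- The maximum norm distance ‖X − X̃‖_∞ between two meshes with the same N. -/
def meshDist {N : ℕ} (m m' : Mesh N) : ℝ :=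
  (Finset.range (N+1)).sup' (Finset.nonempty_range_iff.mpr (Nat.succ_ne_zero N))
    (fun i => |m.x i - m'.x i|)

/-- The energy norm squared ‖v‖_E² = ∫₀¹ (a v'² + (c − b'/2) v²) dx. -/
def Coeffs.energySq (P : Coeffs) (v : H1) : ℝ :=
  ∫ t in (0:ℝ)..1, (P.a t * (v.dval t)^2 + (P.c t - P.b' t / 2) * (v.val t)^2)

/-- Lebesgue measure on the unit interval. -/
abbrev unitMeas : Measure ℝ := volume.restrict (Set.Ioc 0 1)

lemma integral_unit (g : ℝ → ℝ) : ∫ t in (0:ℝ)..1, g t = ∫ t, g t ∂unitMeas :=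
  intervalIntegral.integral_of_le zero_le_one

lemma intervalIntegrable_unit {g : ℝ → ℝ} :
    IntervalIntegrable g volume 0 1 ↔ Integrable g unitMeas :=
  intervalIntegrable_iff_integrableOn_Ioc_of_le zero_le_one

lemma restrict_Ioo_eq_unitMeas : volume.restrict (Set.Ioo (0:ℝ) 1) = unitMeas :=
  Measure.restrict_congr_set Ioo_ae_eq_Ioc

lemma ae_unit_of_forall {p : ℝ → Prop} (h : ∀ t ∈ Set.Ioc (0:ℝ) 1, p t) :
    ∀ᵐ t ∂unitMeas, p t :=
  (ae_restrict_iff' measurableSet_Ioc).2 (Filter.Eventually.of_forall h)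

lemma L1_def (g : ℝ → ℝ) : L1 g = ∫ t, |g t| ∂unitMeas := integral_unit _

lemma L2_def (g : ℝ → ℝ) : L2 g = Real.sqrt (∫ t, (g t)^2 ∂unitMeas) := by
  rw [L2, integral_unit]

lemma L1_nonneg (g : ℝ → ℝ) : 0 ≤ L1 g := by
  rw [L1_def]; exact integral_nonneg fun _ => abs_nonneg _

lemma L2_nonneg (g : ℝ → ℝ) : 0 ≤ L2 g := Real.sqrt_nonneg _

lemma L2_sq (g : ℝ → ℝ) : L2 g ^ 2 = ∫ t, (g t)^2 ∂unitMeas := by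
  rw [L2_def, Real.sq_sqrt (integral_nonneg fun _ => sq_nonneg _)]

lemma L1_congr {g g' : ℝ → ℝ} (h : g =ᵐ[unitMeas] g') : L1 g = L1 g' := by
  rw [L1_def, L1_def]
  exact integral_congr_ae (h.mono fun t ht => by simp only [ht])

lemma L2_congr {g g' : ℝ → ℝ} (h : g =ᵐ[unitMeas] g') : L2 g = L2 g' := by
  rw [L2_def, L2_def]
  congr 1
  exact integral_congr_ae (h.mono fun t ht => by simp only [ht])

lemma integral_abs_mul_abs_le {ν : Measure ℝ} {f g : ℝ → ℝ} (hf : MemLp f 2 ν)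
    (hg : MemLp g 2 ν) :
    ∫ t, |f t| * |g t| ∂ν ≤ Real.sqrt (∫ t, (f t)^2 ∂ν) * Real.sqrt (∫ t, (g t)^2 ∂ν) := by
  have := integral_mul_le_Lp_mul_Lq_of_nonneg (μ := ν) (p := 2) (q := 2)
    Real.HolderConjugate.two_two
    (f := fun t => |f t|) (g := fun t => |g t|)
    (Filter.Eventually.of_forall fun _ => abs_nonneg _)
    (Filter.Eventually.of_forall fun _ => abs_nonneg _)
    (by rw [ENNReal.ofReal_ofNat]; exact hf.abs) (by rw [ENNReal.ofReal_ofNat]; exact hg.abs)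
  simpa [Real.sqrt_eq_rpow] using this

lemma MemLp.top_mul {f g : ℝ → ℝ} {p : ENNReal} (hf : MemLp f ⊤ unitMeas)
    (hg : MemLp g p unitMeas) : MemLp (fun t => f t * g t) p unitMeas :=
  MemLp.mul' hg hf

lemma integrable_mul_of_memLp_two {f g : ℝ → ℝ} (hf : MemLp f 2 unitMeas)
    (hg : MemLp g 2 unitMeas) : Integrable (fun t => f t * g t) unitMeas :=
  MemLp.integrable_mul hf hg

lemma memLp_two_of_top {f : ℝ → ℝ} (hf : MemLp f ⊤ unitMeas) : MemLp f 2 unitMeas :=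
  hf.mono_exponent le_top

lemma integrable_of_memLp_two {f : ℝ → ℝ} (hf : MemLp f 2 unitMeas) : Integrable f unitMeas :=
  hf.integrable one_le_two

lemma L1_le_L2 {g : ℝ → ℝ} (hg : MemLp g 2 unitMeas) : L1 g ≤ L2 g := by
  have := integral_abs_mul_abs_le hg (memLp_const (μ := unitMeas) (p := 2) (1:ℝ))
  simpa [L1_def, L2_def] using this

lemma integral_abs_mul_abs_le_L2 {f g : ℝ → ℝ} (hf : MemLp f 2 unitMeas)
    (hg : MemLp g 2 unitMeas) : ∫ t, |f t| * |g t| ∂unitMeas ≤ L2 f * L2 g := by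
  rw [L2_def, L2_def]; exact integral_abs_mul_abs_le hf hg

lemma L2_add_le {f g : ℝ → ℝ} (hf : MemLp f 2 unitMeas) (hg : MemLp g 2 unitMeas) :
    L2 (fun t => f t + g t) ≤ L2 f + L2 g := by
  refine abs_le_of_sq_le_sq' ?_ (add_nonneg (L2_nonneg f) (L2_nonneg g)) |>.2
  have hfg : Integrable (fun t => |f t| * |g t|) unitMeas :=
    integrable_mul_of_memLp_two hf.abs hg.abs
  have hs : Integrable (fun t => (f t)^2 + 2 * (|f t| * |g t|)) unitMeas :=
    hf.integrable_sq.add (hfg.const_mul 2)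
  have h : ∫ t, (f t + g t)^2 ∂unitMeas
      ≤ ∫ t, ((f t)^2 + 2 * (|f t| * |g t|) + (g t)^2) ∂unitMeas := by
    refine integral_mono (hf.add hg).integrable_sq
      (hs.add hg.integrable_sq) fun t => ?_
    have := le_abs_self (f t * g t)
    rw [abs_mul] at this
    simp only
    nlinarith
  rw [integral_add hs hg.integrable_sq,
    integral_add hf.integrable_sq (hfg.const_mul 2), integral_const_mul] at h
  have := integral_abs_mul_abs_le_L2 hf hg
  rw [L2_sq]
  have h1 := L2_sq f
  have h2 := L2_sq g
  nlinarith

lemma L2_le_of_abs_le {g : ℝ → ℝ} {S : ℝ} (h : ∀ t ∈ Set.Ioc (0:ℝ) 1, |g t| ≤ S) :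
    L2 g ≤ S := by
  have hS : 0 ≤ S := (abs_nonneg _).trans (h 1 (by simp))
  refine abs_le_of_sq_le_sq' ?_ hS |>.2
  rw [L2_sq]
  have := integral_mono_of_nonneg (μ := unitMeas) (f := fun t => (g t)^2) (g := fun _ => S^2)
    (Filter.Eventually.of_forall fun _ => sq_nonneg _) (integrable_const _)
    (ae_unit_of_forall fun t ht => by
      exact sq_le_sq' (abs_le.1 (h t ht)).1 (abs_le.1 (h t ht)).2)
  simpa using this

/-- `g` is a primitive on `[0,1]` of the integrable function `g'`. -/
def IsPrim (g g' : ℝ → ℝ) : Prop :=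
  IntervalIntegrable g' volume 0 1 ∧ ∀ x ∈ Set.Icc (0:ℝ) 1, g x = g 0 + ∫ t in (0:ℝ)..x, g' t

namespace IsPrim

variable {g g' k k' : ℝ → ℝ}

lemma integrable_sub (hg : IsPrim g g') {α β : ℝ} (hα : α ∈ Set.Icc (0:ℝ) 1)
    (hβ : β ∈ Set.Icc (0:ℝ) 1) : IntervalIntegrable g' volume α β :=
  hg.1.mono_set (by
    rw [Set.uIcc_of_le zero_le_one]; exact Set.uIcc_subset_Icc hα hβ)

lemma integral_eq (hg : IsPrim g g') {α β : ℝ} (hα : α ∈ Set.Icc (0:ℝ) 1)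
    (hβ : β ∈ Set.Icc (0:ℝ) 1) : ∫ t in α..β, g' t = g β - g α := by
  have h0 : (0:ℝ) ∈ Set.Icc (0:ℝ) 1 := by simp
  rw [hg.2 α hα, hg.2 β hβ, ← intervalIntegral.integral_interval_sub_left
    (hg.integrable_sub h0 hβ) (hg.integrable_sub h0 hα)]
  ring

lemma absolutelyContinuous (hg : IsPrim g g') :
    AbsolutelyContinuousOnInterval (fun x => g 0 + ∫ t in (0:ℝ)..x, g' t) 0 1 :=
  (LipschitzWith.const (g 0)).lipschitzOnWith.absolutelyContinuousOnInterval.add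
    (hg.1.absolutelyContinuousOnInterval_intervalIntegral (by simp))

lemma continuousOn (hg : IsPrim g g') : ContinuousOn g (Set.Icc 0 1) := by
  have := hg.absolutelyContinuous.continuousOn
  rw [Set.uIcc_of_le zero_le_one] at this
  exact this.congr hg.2

lemma mul (hg : IsPrim g g') (hk : IsPrim k k') :
    IsPrim (fun x => g x * k x) (fun x => g' x * k x + g x * k' x) := by
  have hu : Set.uIcc (0:ℝ) 1 = Set.Icc 0 1 := Set.uIcc_of_le zero_le_one
  refine ⟨(hg.1.mul_continuousOn (hu ▸ hk.continuousOn)).add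
    (hk.1.continuousOn_mul (hu ▸ hg.continuousOn)), fun x hx => ?_⟩
  have hsub : Set.uIcc 0 x ⊆ Set.uIcc (0:ℝ) 1 := by
    rw [hu, Set.uIcc_of_le hx.1]; exact Set.Icc_subset_Icc_right hx.2
  have key := (hg.absolutelyContinuous.mono hsub).integral_deriv_mul_eq_sub
    (hk.absolutelyContinuous.mono hsub)
  have h0 : (0:ℝ) ∈ Set.Icc (0:ℝ) 1 := by simp
  rw [← hg.2 x hx, ← hg.2 0 h0, ← hk.2 x hx, ← hk.2 0 h0] at key
  rw [eq_comm, ← eq_sub_iff_add_eq', ← key]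
  refine intervalIntegral.integral_congr_ae ?_
  filter_upwards [hg.1.ae_hasDerivAt_integral, hk.1.ae_hasDerivAt_integral] with t h1 h2 ht
  have ht' : t ∈ Set.uIcc (0:ℝ) 1 := hsub (Set.uIoc_subset_uIcc ht)
  rw [((h1 ht' 0 (by simp)).const_add (g 0)).deriv, ((h2 ht' 0 (by simp)).const_add (k 0)).deriv,
    ← hg.2 t (hu ▸ ht'), ← hk.2 t (hu ▸ ht')]

lemma sub (hg : IsPrim g g') (hk : IsPrim k k') :
    IsPrim (fun x => g x - k x) (fun x => g' x - k' x) := by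
  refine ⟨hg.1.sub hk.1, fun x hx => ?_⟩
  have h0 : (0:ℝ) ∈ Set.Icc (0:ℝ) 1 := by simp
  rw [intervalIntegral.integral_sub (hg.integrable_sub h0 hx) (hk.integrable_sub h0 hx),
    hg.integral_eq h0 hx, hk.integral_eq h0 hx]
  ring

lemma exists_bound (hg : IsPrim g g') : ∃ M, ∀ x ∈ Set.Icc (0:ℝ) 1, |g x| ≤ M :=
  isCompact_Icc.exists_bound_of_continuousOn hg.continuousOn

lemma aestronglyMeasurable (hg : IsPrim g g') : AEStronglyMeasurable g unitMeas :=
  (hg.continuousOn.mono Set.Ioc_subset_Icc_self).aestronglyMeasurable measurableSet_Ioc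

lemma memLp_top (hg : IsPrim g g') : MemLp g ⊤ unitMeas := by
  obtain ⟨M, hM⟩ := hg.exists_bound
  exact memLp_top_of_bound hg.aestronglyMeasurable M
    (ae_unit_of_forall fun t ht => hM t (Set.Ioc_subset_Icc_self ht))

lemma abs_sub_le (hg : IsPrim g g') {x : ℝ} (hx : x ∈ Set.Icc (0:ℝ) 1) :
    |g x - g 0| ≤ L1 g' := by
  have h0 : (0:ℝ) ∈ Set.Icc (0:ℝ) 1 := by simp
  rw [← hg.integral_eq h0 hx, L1]
  refine (intervalIntegral.abs_integral_le_integral_abs hx.1).trans ?_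
  exact intervalIntegral.integral_mono_interval le_rfl hx.1 hx.2
    (Filter.Eventually.of_forall fun _ => abs_nonneg _) hg.1.abs

lemma abs_le_L1 (hg : IsPrim g g') (hg0 : g 0 = 0) {x : ℝ} (hx : x ∈ Set.Icc (0:ℝ) 1) :
    |g x| ≤ L1 g' := by
  simpa [hg0] using hg.abs_sub_le hx

end IsPrim

lemma H1.isPrim (v : H1) : IsPrim v.val v.dval := ⟨v.dval_int, v.ftc⟩

lemma H1.memLp_dval (v : H1) : MemLp v.dval 2 unitMeas :=
  (memLp_two_iff_integrable_sq v.dval_meas.aestronglyMeasurable).2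
    (intervalIntegrable_unit.1 v.dval_sq_int)

lemma H1.memLp_val (v : H1) : MemLp v.val ⊤ unitMeas := v.isPrim.memLp_top

lemma H1.abs_val_le (v : H1) (h0 : v.val 0 = 0) {x : ℝ} (hx : x ∈ Set.Icc (0:ℝ) 1) :
    |v.val x| ≤ L2 v.dval :=
  (v.isPrim.abs_le_L1 h0 hx).trans (L1_le_L2 v.memLp_dval)

lemma memLp_top_of_ae_bdd {g : ℝ → ℝ} (hg : Measurable g)
    (h : ∃ M : ℝ, ∀ᵐ x ∂(volume.restrict (Set.Ioo (0:ℝ) 1)), |g x| ≤ M) :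
    MemLp g ⊤ unitMeas := by
  obtain ⟨M, hM⟩ := h
  rw [restrict_Ioo_eq_unitMeas] at hM
  exact memLp_top_of_bound hg.aestronglyMeasurable M hM

namespace Coeffs

variable (P : Coeffs)

lemma isPrim_a : IsPrim P.a P.a' := ⟨P.a'_int, P.ftc_a⟩
lemma isPrim_b : IsPrim P.b P.b' := ⟨P.b'_int, P.ftc_b⟩
lemma memLp_a : MemLp P.a ⊤ unitMeas := P.isPrim_a.memLp_top
lemma memLp_b : MemLp P.b ⊤ unitMeas := P.isPrim_b.memLp_top
lemma memLp_c : MemLp P.c ⊤ unitMeas := memLp_top_of_ae_bdd P.c_meas P.c_bdd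
lemma memLp_a' : MemLp P.a' ⊤ unitMeas := memLp_top_of_ae_bdd P.a'_meas P.a'_bdd
lemma memLp_b' : MemLp P.b' ⊤ unitMeas := memLp_top_of_ae_bdd P.b'_meas P.b'_bdd

/-- `M` bounds all the coefficients and the right-hand side almost everywhere. -/
structure BoundedBy (f : ℝ → ℝ) (M : ℝ) : Prop where
  nonneg : 0 ≤ M
  ae_le : ∀ᵐ t ∂unitMeas, |P.a t| ≤ M ∧ |P.b t| ≤ M ∧ |P.c t| ≤ M ∧
    |P.a' t| ≤ M ∧ |P.b' t| ≤ M ∧ |f t| ≤ M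

lemma exists_boundedBy {f : ℝ → ℝ} (hf : MemLinf f) : ∃ M, P.BoundedBy f M := by
  obtain ⟨Ma, ha⟩ := P.isPrim_a.exists_bound
  obtain ⟨Mb, hb⟩ := P.isPrim_b.exists_bound
  obtain ⟨Mc, hc⟩ := P.c_bdd
  obtain ⟨Ma', ha'⟩ := P.a'_bdd
  obtain ⟨Mb', hb'⟩ := P.b'_bdd
  obtain ⟨Mf, hf⟩ := hf.2
  rw [restrict_Ioo_eq_unitMeas] at hc ha' hb' hf
  refine ⟨|Ma| + |Mb| + |Mc| + |Ma'| + |Mb'| + |Mf|, by positivity, ?_⟩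
  filter_upwards [hc, ha', hb', hf, ae_unit_of_forall (p := fun t => |P.a t| ≤ Ma ∧ |P.b t| ≤ Mb)
    fun t ht => ⟨ha t (Set.Ioc_subset_Icc_self ht), hb t (Set.Ioc_subset_Icc_self ht)⟩]
    with t h1 h2 h3 h4 h5
  have := le_abs_self Ma
  have := le_abs_self Mb
  have := le_abs_self Mc
  have := le_abs_self Ma'
  have := le_abs_self Mb'
  have := le_abs_self Mf
  have := abs_nonneg Ma
  have := abs_nonneg Mb
  have := abs_nonneg Mc
  have := abs_nonneg Ma'
  have := abs_nonneg Mb'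
  have := abs_nonneg Mf
  refine ⟨?_, ?_, ?_, ?_, ?_, ?_⟩ <;> linarith

lemma integrable_B (u v : H1) : Integrable (fun t => P.a t * u.dval t * v.dval t
    + P.b t * u.dval t * v.val t + P.c t * u.val t * v.val t) unitMeas :=
  ((integrable_mul_of_memLp_two (MemLp.top_mul P.memLp_a u.memLp_dval) v.memLp_dval).add
    (integrable_mul_of_memLp_two (MemLp.top_mul P.memLp_b u.memLp_dval)
      (memLp_two_of_top v.memLp_val))).add
    (integrable_mul_of_memLp_two
      (memLp_two_of_top (MemLp.top_mul P.memLp_c u.memLp_val)) (memLp_two_of_top v.memLp_val))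

lemma B_eq_sub {u v w : H1} (z : H1)
    (hd : ∀ᵐ t ∂unitMeas, u.dval t = v.dval t - w.dval t)
    (hv : ∀ᵐ t ∂unitMeas, u.val t = v.val t - w.val t) :
    P.B u z = P.B v z - P.B w z := by
  rw [B, B, B, integral_unit, integral_unit, integral_unit,
    ← integral_sub (P.integrable_B v z) (P.integrable_B w z)]
  refine integral_congr_ae ?_
  filter_upwards [hd, hv] with t h1 h2
  rw [h1, h2]; ring

lemma B_congr {u v : H1} (z : H1) (hd : u.dval =ᵐ[unitMeas] v.dval)
    (hv : u.val =ᵐ[unitMeas] v.val) : P.B u z = P.B v z := by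
  rw [B, B, integral_unit, integral_unit]
  refine integral_congr_ae ?_
  filter_upwards [hd, hv] with t h1 h2
  rw [h1, h2]

lemma B_self {v : H1} (h0 : v.val 0 = 0) (h1 : v.val 1 = 0) : P.B v v = P.energySq v := by
  have hp := (P.isPrim_b.mul v.isPrim).mul v.isPrim
  have hz := hp.integral_eq (α := 0) (β := 1) (by simp) (by simp)
  rw [h0, h1] at hz
  simp only [mul_zero, sub_zero] at hz
  rw [integral_unit] at hz
  have hi := intervalIntegrable_unit.1 hp.1
  rw [B, energySq, integral_unit, integral_unit, ← sub_zero (∫ t, _ ∂_), ← zero_div 2, ← hz,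
    ← integral_div, ← integral_sub (P.integrable_B v v) (hi.div_const 2)]
  refine integral_congr_ae (Filter.Eventually.of_forall fun t => ?_)
  simp only
  ring

lemma a0_mul_sq_le_energySq (v : H1) : P.a0 * L2 v.dval ^ 2 ≤ P.energySq v := by
  rw [L2_sq, energySq, integral_unit, ← integral_const_mul]
  have hsq := v.memLp_dval.integrable_sq
  have hae := P.cb_nonneg
  rw [restrict_Ioo_eq_unitMeas] at hae
  refine integral_mono_ae (hsq.const_mul _) ?_ ?_
  · refine Integrable.add ?_ ?_
    · refine (integrable_mul_of_memLp_two (MemLp.top_mul P.memLp_a v.memLp_dval)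
        v.memLp_dval).congr (Filter.Eventually.of_forall fun t => ?_)
      simp only; ring
    · have hc : MemLp (fun t => P.c t - P.b' t / 2) ⊤ unitMeas := by
        simpa only [div_eq_mul_inv] using! P.memLp_c.sub (P.memLp_b'.mul_const 2⁻¹)
      refine (integrable_mul_of_memLp_two (memLp_two_of_top (MemLp.top_mul hc v.memLp_val))
        (memLp_two_of_top v.memLp_val)).congr (Filter.Eventually.of_forall fun t => ?_)
      simp only; ring
  · filter_upwards [hae, ae_unit_of_forall fun t ht => P.a_lb t (Set.Ioc_subset_Icc_self ht)]
      with t h1 h2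
    have := mul_le_mul_of_nonneg_right h2 (sq_nonneg (v.dval t))
    have := mul_nonneg h1 (sq_nonneg (v.val t))
    linarith

lemma a0_mul_sq_le_B {v : H1} (h0 : v.val 0 = 0) (h1 : v.val 1 = 0) :
    P.a0 * L2 v.dval ^ 2 ≤ P.B v v := by
  rw [P.B_self h0 h1]; exact P.a0_mul_sq_le_energySq v

end Coeffs

lemma integrable_ip {f : ℝ → ℝ} (hf : MemL2 f) (v : H1) :
    Integrable (fun t => f t * v.val t) unitMeas :=
  integrable_mul_of_memLp_two ((memLp_two_iff_integrable_sq hf.1.aestronglyMeasurable).2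
    (intervalIntegrable_unit.1 hf.2)) (memLp_two_of_top v.memLp_val)

lemma abs_ip_sub_le {P : Coeffs} {f : ℝ → ℝ} {M : ℝ} (hM : P.BoundedBy f M) (hf : MemL2 f)
    (v w : H1) : |ip f v - ip f w| ≤ M * L2 (fun t => v.val t - w.val t) := by
  have hd : MemLp (fun t => v.val t - w.val t) 2 unitMeas :=
    memLp_two_of_top (v.memLp_val.sub w.memLp_val)
  refine le_trans ?_ (mul_le_mul_of_nonneg_left (L1_le_L2 hd) hM.nonneg)
  rw [ip, ip, integral_unit, integral_unit, L1_def,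
    ← integral_sub (integrable_ip hf v) (integrable_ip hf w), ← integral_const_mul]
  refine abs_integral_le_integral_abs.trans (integral_mono_of_nonneg
    (Filter.Eventually.of_forall fun _ => abs_nonneg _)
    ((integrable_of_memLp_two hd).abs.const_mul M) ?_)
  filter_upwards [hM.ae_le] with t ht
  rw [← mul_sub, abs_mul]
  exact mul_le_mul_of_nonneg_right ht.2.2.2.2.2 (abs_nonneg _)

lemma abs_ip_le {P : Coeffs} {f : ℝ → ℝ} {M : ℝ} (hM : P.BoundedBy f M) {v : H1}
    (h0 : v.val 0 = 0) : |ip f v| ≤ M * L2 v.dval := by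
  rw [ip]
  refine (intervalIntegral.abs_integral_le_integral_abs zero_le_one).trans ?_
  rw [integral_unit]
  have := integral_mono_of_nonneg (μ := unitMeas) (f := fun t => |f t * v.val t|)
    (g := fun _ => M * L2 v.dval)
    (Filter.Eventually.of_forall fun _ => abs_nonneg _) (integrable_const _) (by
      filter_upwards [hM.ae_le, ae_unit_of_forall fun t ht =>
        v.abs_val_le h0 (Set.Ioc_subset_Icc_self ht)] with t ht ht'
      simp only [abs_mul]
      exact mul_le_mul ht.2.2.2.2.2 ht' (abs_nonneg _) hM.nonneg)
  simpa using this

namespace Mesh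

variable {N : ℕ} (m : Mesh N)

lemma x_le {i j : ℕ} (hij : i ≤ j) (hj : j ≤ N) : m.x i ≤ m.x j := by
  induction j, hij using Nat.le_induction with
  | base => exact le_rfl
  | succ k hk ih => exact (ih (by omega)).trans (m.x_mono k (by omega)).le

lemma x_mem {i : ℕ} (hi : i ≤ N) : m.x i ∈ Set.Icc (0:ℝ) 1 :=
  ⟨m.x_zero ▸ m.x_le (Nat.zero_le i) hi, m.x_last ▸ m.x_le hi le_rfl⟩

lemma h_pos {i : ℕ} (hi : i < N) : 0 < m.h i := sub_pos.2 (m.x_mono i hi)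

lemma N_pos {N : ℕ} (m : Mesh N) : 0 < N := Nat.pos_of_ne_zero fun h => by
  subst h
  exact zero_ne_one (m.x_zero.symm.trans m.x_last)

lemma exists_elem {t : ℝ} (ht : t ∈ Set.Ioc (0:ℝ) 1) :
    ∃ i < N, t ∈ Set.Ioc (m.x i) (m.x (i+1)) := by
  have hex : ∃ j, t ≤ m.x j := ⟨N, m.x_last ▸ ht.2⟩
  classical
  have hpos : Nat.find hex ≠ 0 := fun h0 => by
    have := Nat.find_spec hex
    rw [h0, m.x_zero] at this
    exact absurd ht.1 this.not_gt
  obtain ⟨i, hi⟩ := Nat.exists_eq_succ_of_ne_zero hpos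
  have hN : Nat.find hex ≤ N := Nat.find_min' hex (m.x_last ▸ ht.2)
  refine ⟨i, by omega, lt_of_not_ge (Nat.find_min hex (by omega : i < Nat.find hex)), ?_⟩
  have := Nat.find_spec hex
  rwa [hi] at this

/-- The piecewise constant function with value `σ i` on the element of index `i`. -/
def pc (σ : ℕ → ℝ) (t : ℝ) : ℝ :=
  ∑ i ∈ Finset.range N, σ i * (Set.Ioc (m.x i) (m.x (i+1))).indicator (fun _ => (1:ℝ)) t

lemma pc_eq (σ : ℕ → ℝ) {i : ℕ} (hi : i < N) {t : ℝ} (ht : t ∈ Set.Ioc (m.x i) (m.x (i+1))) :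
    m.pc σ t = σ i := by
  rw [pc, Finset.sum_eq_single_of_mem i (Finset.mem_range.2 hi)]
  · rw [Set.indicator_of_mem ht, mul_one]
  · intro j hj hji
    rw [Set.indicator_of_notMem, mul_zero]
    intro hj'
    have hjN := Finset.mem_range.1 hj
    rcases lt_or_gt_of_ne hji with h | h
    · exact absurd (hj'.2.trans (m.x_le h hi.le)) ht.1.not_ge
    · exact absurd (ht.2.trans (m.x_le h hjN.le)) hj'.1.not_ge

lemma exists_pc_eq {t : ℝ} (ht : t ∈ Set.Ioc (0:ℝ) 1) : ∃ i < N, ∀ σ, m.pc σ t = σ i := by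
  obtain ⟨i, hi, hti⟩ := m.exists_elem ht
  exact ⟨i, hi, fun σ => m.pc_eq σ hi hti⟩

lemma measurable_pc (σ : ℕ → ℝ) : Measurable (m.pc σ) :=
  Finset.measurable_fun_sum _ fun _ _ =>
    (measurable_const.indicator measurableSet_Ioc).const_mul _

lemma memLp_pc (σ : ℕ → ℝ) {p : ENNReal} : MemLp (m.pc σ) p unitMeas := by
  refine MemLp.mono_exponent (q := ⊤) (memLp_top_of_bound (m.measurable_pc σ).aestronglyMeasurable
    (∑ i ∈ Finset.range N, |σ i|) (ae_unit_of_forall fun t ht => ?_)) le_top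
  obtain ⟨i, hi, h⟩ := m.exists_pc_eq ht
  rw [h σ, Real.norm_eq_abs]
  exact Finset.single_le_sum (f := fun i => |σ i|) (fun _ _ => abs_nonneg _)
    (Finset.mem_range.2 hi)

lemma sum_integral_elem {g : ℝ → ℝ} (hg : Integrable g unitMeas) {j : ℕ} (hj : j ≤ N) :
    ∑ i ∈ Finset.range j, ∫ t in (m.x i)..(m.x (i+1)), g t = ∫ t in (0:ℝ)..(m.x j), g t := by
  rw [intervalIntegral.sum_integral_adjacent_intervals, m.x_zero]
  intro k hk
  refine (intervalIntegrable_unit.2 hg).mono_set ?_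
  rw [Set.uIcc_of_le zero_le_one]
  exact Set.uIcc_subset_Icc (m.x_mem (by omega)) (m.x_mem (by omega))

lemma integral_elem_congr {g k : ℝ → ℝ} {i : ℕ} (hi : i < N)
    (h : ∀ t ∈ Set.Ioc (m.x i) (m.x (i+1)), g t = k t) :
    ∫ t in (m.x i)..(m.x (i+1)), g t = ∫ t in (m.x i)..(m.x (i+1)), k t := by
  refine intervalIntegral.integral_congr_ae (Filter.Eventually.of_forall fun t ht => h t ?_)
  rwa [Set.uIoc_of_le (m.x_mono i hi).le] at ht

lemma integral_pc (σ : ℕ → ℝ) {j : ℕ} (hj : j ≤ N) :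
    ∫ t in (0:ℝ)..(m.x j), m.pc σ t = ∑ i ∈ Finset.range j, m.h i * σ i := by
  rw [← m.sum_integral_elem ((m.memLp_pc σ).integrable le_rfl) hj]
  refine Finset.sum_congr rfl fun i hi => ?_
  have hiN : i < N := (Finset.mem_range.1 hi).trans_le hj
  rw [m.integral_elem_congr (k := fun _ => σ i) hiN fun t ht => m.pc_eq σ hiN ht,
    intervalIntegral.integral_const, smul_eq_mul, h]

lemma integral_unit_pc (σ : ℕ → ℝ) :
    ∫ t, m.pc σ t ∂unitMeas = ∑ i ∈ Finset.range N, m.h i * σ i := by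
  rw [← integral_unit, ← m.integral_pc σ le_rfl, m.x_last]

lemma L1_pc (σ : ℕ → ℝ) : L1 (m.pc σ) = ∑ i ∈ Finset.range N, m.h i * |σ i| := by
  rw [L1_def, ← m.integral_unit_pc]
  refine integral_congr_ae (ae_unit_of_forall fun t ht => ?_)
  obtain ⟨i, -, h⟩ := m.exists_pc_eq ht
  simp only [h]

lemma L2_sq_pc (σ : ℕ → ℝ) : L2 (m.pc σ) ^ 2 = ∑ i ∈ Finset.range N, m.h i * σ i ^ 2 := by
  rw [L2_sq, ← m.integral_unit_pc]
  refine integral_congr_ae (ae_unit_of_forall fun t ht => ?_)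
  obtain ⟨i, -, h⟩ := m.exists_pc_eq ht
  simp only [h]

lemma L1_pc_mul_le (σ τ : ℕ → ℝ) :
    L1 (m.pc fun i => σ i * τ i) ≤ L2 (m.pc σ) * L2 (m.pc τ) := by
  refine le_trans (le_of_eq ?_) (integral_abs_mul_abs_le_L2 (m.memLp_pc σ) (m.memLp_pc τ))
  rw [L1_def]
  refine integral_congr_ae (ae_unit_of_forall fun t ht => ?_)
  obtain ⟨i, -, h⟩ := m.exists_pc_eq ht
  simp only [h, abs_mul]

lemma integral_mul_pc {g g' : ℝ → ℝ} (hg : IsPrim g g') (σ : ℕ → ℝ) :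
    ∫ t, g' t * m.pc σ t ∂unitMeas
      = ∑ i ∈ Finset.range N, σ i * (g (m.x (i+1)) - g (m.x i)) := by
  have hgint : Integrable (fun t => g' t * m.pc σ t) unitMeas :=
    memLp_one_iff_integrable.1 (MemLp.mul' (p := 1) (q := ⊤) (m.memLp_pc σ)
      (memLp_one_iff_integrable.2 (intervalIntegrable_unit.1 hg.1)))
  have := m.sum_integral_elem hgint le_rfl
  rw [m.x_last, integral_unit] at this
  rw [← this]
  refine Finset.sum_congr rfl fun i hi => ?_
  have hiN : i < N := Finset.mem_range.1 hi
  rw [m.integral_elem_congr (k := fun t => σ i * g' t) hiN fun t ht => by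
      rw [m.pc_eq σ hiN ht, mul_comm],
    intervalIntegral.integral_const_mul, hg.integral_eq (m.x_mem hiN.le) (m.x_mem hiN)]

/-- The continuous piecewise linear function vanishing at `0` with slopes `σ`. -/
def toH1 (σ : ℕ → ℝ) : H1 where
  val x := ∫ t in (0:ℝ)..x, m.pc σ t
  dval := m.pc σ
  dval_meas := m.measurable_pc σ
  dval_int := intervalIntegrable_unit.2 ((m.memLp_pc σ).integrable le_rfl)
  dval_sq_int := intervalIntegrable_unit.2 (m.memLp_pc σ).integrable_sq
  ftc x _ := by simp

@[simp] lemma toH1_dval (σ : ℕ → ℝ) : (m.toH1 σ).dval = m.pc σ := rfl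

@[simp] lemma toH1_val_zero (σ : ℕ → ℝ) : (m.toH1 σ).val 0 = 0 := by simp [toH1]

lemma toH1_val_node (σ : ℕ → ℝ) {j : ℕ} (hj : j ≤ N) :
    (m.toH1 σ).val (m.x j) = ∑ i ∈ Finset.range j, m.h i * σ i := m.integral_pc σ hj

lemma toH1_val_one (σ : ℕ → ℝ) :
    (m.toH1 σ).val 1 = ∑ i ∈ Finset.range N, m.h i * σ i := by
  rw [← m.toH1_val_node σ le_rfl, m.x_last]

lemma isPL_toH1 (σ : ℕ → ℝ) : m.IsPL (m.toH1 σ) := fun i hi =>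
  ⟨σ i, fun _ ht => m.pc_eq σ hi (Set.Ioo_subset_Ioc_self ht)⟩

lemma pc_sub (σ τ : ℕ → ℝ) (t : ℝ) : m.pc (fun i => σ i - τ i) t = m.pc σ t - m.pc τ t := by
  simp only [pc, sub_mul, Finset.sum_sub_distrib]

lemma toH1_val_sub (σ τ : ℕ → ℝ) {x : ℝ} (hx : x ∈ Set.Icc (0:ℝ) 1) :
    (m.toH1 fun i => σ i - τ i).val x = (m.toH1 σ).val x - (m.toH1 τ).val x := by
  have h0 : (0:ℝ) ∈ Set.Icc (0:ℝ) 1 := by simp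
  simp only [toH1, pc_sub]
  exact intervalIntegral.integral_sub ((m.toH1 σ).isPrim.integrable_sub h0 hx)
    ((m.toH1 τ).isPrim.integrable_sub h0 hx)

lemma exists_slopes {v : H1} (hv : m.IsPL v) (h0 : v.val 0 = 0) :
    ∃ σ : ℕ → ℝ, v.dval =ᵐ[unitMeas] (m.toH1 σ).dval ∧
      ∀ x ∈ Set.Icc (0:ℝ) 1, v.val x = (m.toH1 σ).val x := by
  choose! σ hσ using hv
  have hae : v.dval =ᵐ[unitMeas] m.pc σ := by
    have hnull : ∀ᵐ t ∂unitMeas, t ∉ (Set.range m.x) :=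
      ae_restrict_of_ae ((Set.countable_range m.x).ae_notMem _)
    filter_upwards [hnull, ae_unit_of_forall fun t ht => m.exists_elem ht] with t h1 ⟨i, hi, hti⟩
    rw [m.pc_eq σ hi hti]
    exact hσ i hi t ⟨hti.1, lt_of_le_of_ne hti.2 fun h => h1 ⟨i+1, h.symm⟩⟩
  refine ⟨σ, hae, fun x hx => ?_⟩
  rw [v.ftc x hx, h0, zero_add]
  refine intervalIntegral.integral_congr_ae ?_
  filter_upwards [(ae_restrict_iff' measurableSet_Ioc).1 hae] with t ht htx
  rw [Set.uIoc_of_le hx.1] at htx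
  exact ht ⟨htx.1, htx.2.trans hx.2⟩

end Mesh

lemma Coeffs.a0_mul_L2_le {P : Coeffs} {f : ℝ → ℝ} {M : ℝ} (hM : P.BoundedBy f M)
    {v : H1} (h0 : v.val 0 = 0) (h1 : v.val 1 = 0) (hB : P.B v v = ip f v) :
    P.a0 * L2 v.dval ≤ M := by
  have h := P.a0_mul_sq_le_B h0 h1
  rw [hB] at h
  have h2 := h.trans ((le_abs_self _).trans (abs_ip_le hM h0))
  rcases (L2_nonneg v.dval).eq_or_lt with hz | hz
  · rw [← hz, mul_zero]; exact hM.nonneg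
  · exact le_of_mul_le_mul_right (by linarith) hz

namespace Mesh

variable {N : ℕ} (m : Mesh N)

/-- Slopes of the piecewise linear interpolant of `g`. -/
def interpSlope (g : ℝ → ℝ) (i : ℕ) : ℝ := (g (m.x (i+1)) - g (m.x i)) / m.h i

lemma h_mul_interpSlope (g : ℝ → ℝ) {i : ℕ} (hi : i < N) :
    m.h i * m.interpSlope g i = g (m.x (i+1)) - g (m.x i) :=
  mul_div_cancel₀ _ (m.h_pos hi).ne'

lemma interp_node {g : ℝ → ℝ} (h0 : g 0 = 0) {j : ℕ} (hj : j ≤ N) :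
    (m.toH1 (m.interpSlope g)).val (m.x j) = g (m.x j) := by
  rw [m.toH1_val_node _ hj, Finset.sum_congr rfl fun i hi =>
    m.h_mul_interpSlope g ((Finset.mem_range.1 hi).trans_le hj),
    Finset.sum_range_sub (fun i => g (m.x i)), m.x_zero, h0, sub_zero]

/-- Elementwise interpolation error estimate. -/
lemma abs_interp_sub_le {u : H1} {u'' : ℝ → ℝ} (h0 : u.val 0 = 0) (hu : IsPrim u.dval u'')
    {i : ℕ} (hi : i < N) {t : ℝ} (ht : t ∈ Set.Ioc (m.x i) (m.x (i+1))) :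
    |(m.toH1 (m.interpSlope u.val)).val t - u.val t|
      ≤ m.h i * ∫ s in (m.x i)..(m.x (i+1)), |u'' s| := by
  set J := ∫ s in (m.x i)..(m.x (i+1)), |u'' s| with hJ
  set τ := m.interpSlope u.val with hτ
  have hxi := m.x_mem hi.le
  have hxi1 := m.x_mem (Nat.succ_le_of_lt hi)
  have hle := (m.x_mono i hi).le
  have hh := m.h_pos hi
  have hmem : ∀ s ∈ Set.Ioc (m.x i) (m.x (i+1)), s ∈ Set.Icc (0:ℝ) 1 := fun s hs =>
    ⟨hxi.1.trans hs.1.le, hs.2.trans hxi1.2⟩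
  have hosc : ∀ r ∈ Set.Ioc (m.x i) (m.x (i+1)), ∀ s ∈ Set.Ioc (m.x i) (m.x (i+1)),
      |u.dval r - u.dval s| ≤ J := by
    intro r hr s hs
    wlog hsr : s ≤ r generalizing r s
    · rw [abs_sub_comm]; exact this s hs r hr (le_of_not_ge hsr)
    rw [← hu.integral_eq (hmem s hs) (hmem r hr)]
    refine (intervalIntegral.abs_integral_le_integral_abs hsr).trans ?_
    exact intervalIntegral.integral_mono_interval hs.1.le hsr hr.2
      (Filter.Eventually.of_forall fun _ => abs_nonneg _) (hu.integrable_sub hxi hxi1).abs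
  have hderiv : ∀ s ∈ Set.Ioc (m.x i) (m.x (i+1)), |m.pc τ s - u.dval s| ≤ J := by
    intro s hs
    rw [m.pc_eq τ hi hs]
    have h1 : m.h i * (τ i - u.dval s)
        = ∫ r in (m.x i)..(m.x (i+1)), (u.dval r - u.dval s) := by
      rw [intervalIntegral.integral_sub (u.isPrim.integrable_sub hxi hxi1) (by simp),
        u.isPrim.integral_eq hxi hxi1, intervalIntegral.integral_const, smul_eq_mul, mul_sub,
        m.h_mul_interpSlope u.val hi, h]
    have h2 : |m.h i * (τ i - u.dval s)| ≤ J * |m.x (i+1) - m.x i| := by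
      rw [h1]
      refine intervalIntegral.norm_integral_le_of_norm_le_const (E := ℝ) fun r hr => ?_
      rw [Set.uIoc_of_le hle] at hr
      exact hosc r hr s hs
    rw [abs_mul, abs_of_pos hh, ← h, abs_of_pos hh, mul_comm] at h2
    exact le_of_mul_le_mul_right h2 hh
  have he := ((m.toH1 τ).isPrim.sub u.isPrim).integral_eq hxi (hmem t ht)
  rw [m.interp_node h0 hi.le, sub_self, sub_zero] at he
  rw [← he]
  have h3 := intervalIntegral.norm_integral_le_of_norm_le_const (E := ℝ) (a := m.x i) (b := t)
    (C := J) (f := fun s => (m.toH1 τ).dval s - u.dval s) fun s hs => by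
      rw [Set.uIoc_of_le ht.1.le] at hs
      exact hderiv s ⟨hs.1, hs.2.trans ht.2⟩
  rw [Real.norm_eq_abs, abs_of_nonneg (sub_nonneg.2 ht.1.le)] at h3
  refine h3.trans ?_
  rw [mul_comm]
  refine mul_le_mul_of_nonneg_right ?_ (intervalIntegral.integral_nonneg hle fun _ _ =>
    abs_nonneg _)
  rw [h]; linarith [ht.2]

lemma L2_interp_sub_le {u : H1} {u'' : ℝ → ℝ} (h0 : u.val 0 = 0) (hu : IsPrim u.dval u'')
    (hu2 : MemLp u'' 2 unitMeas) {H : ℝ} (hH : ∀ i < N, m.h i ≤ H) :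
    L2 (fun t => (m.toH1 (m.interpSlope u.val)).val t - u.val t) ≤ H ^ 2 * L2 u'' := by
  set e := fun t => (m.toH1 (m.interpSlope u.val)).val t - u.val t with he
  have hH0 : 0 ≤ H := (m.h_pos m.N_pos).le.trans (hH 0 m.N_pos)
  refine abs_le_of_sq_le_sq' ?_ (mul_nonneg (sq_nonneg H) (L2_nonneg _)) |>.2
  have heI : Integrable (fun t => e t ^ 2) unitMeas :=
    (memLp_two_of_top ((m.toH1 _).memLp_val.sub u.memLp_val)).integrable_sq
  rw [mul_pow, L2_sq, L2_sq, ← integral_unit, ← integral_unit, ← m.x_last,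
    ← m.sum_integral_elem heI le_rfl, ← m.sum_integral_elem hu2.integrable_sq le_rfl,
    Finset.mul_sum]
  refine Finset.sum_le_sum fun i hi => ?_
  have hiN := Finset.mem_range.1 hi
  have hle := (m.x_mono i hiN).le
  have hh := m.h_pos hiN
  have hhH := hH i hiN
  have hsub : Set.Ioc (m.x i) (m.x (i+1)) ⊆ Set.Ioc 0 1 :=
    Set.Ioc_subset_Ioc (m.x_mem hiN.le).1 (m.x_mem (Nat.succ_le_of_lt hiN)).2
  have hmono : volume.restrict (Set.Ioc (m.x i) (m.x (i+1))) ≤ unitMeas :=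
    Measure.restrict_mono hsub le_rfl
  set J := ∫ s in (m.x i)..(m.x (i+1)), |u'' s| with hJ
  set Q := ∫ s in (m.x i)..(m.x (i+1)), u'' s ^ 2 with hQ
  have hJ0 : 0 ≤ J := intervalIntegral.integral_nonneg hle fun _ _ => abs_nonneg _
  have hQ0 : 0 ≤ Q := intervalIntegral.integral_nonneg hle fun _ _ => sq_nonneg _
  have hJQ : J ^ 2 ≤ m.h i * Q := by
    have := integral_abs_mul_abs_le (hu2.mono_measure hmono)
      (memLp_const (μ := volume.restrict (Set.Ioc (m.x i) (m.x (i+1)))) (p := 2) (1:ℝ))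
    simp only [abs_one, mul_one, one_pow, ← intervalIntegral.integral_of_le hle,
      intervalIntegral.integral_const, smul_eq_mul] at this
    calc J ^ 2 ≤ (√Q * √(m.x (i+1) - m.x i)) ^ 2 := pow_le_pow_left₀ hJ0 this 2
      _ = m.h i * Q := by
        rw [mul_pow, Real.sq_sqrt hQ0, Real.sq_sqrt (sub_nonneg.2 hle), h, mul_comm]
  have h1 := intervalIntegral.norm_integral_le_of_norm_le_const (E := ℝ) (a := m.x i)
    (b := m.x (i+1))
    (C := (m.h i * J) ^ 2) (f := fun t => e t ^ 2) fun t ht => by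
      rw [Set.uIoc_of_le hle] at ht
      rw [Real.norm_eq_abs, abs_of_nonneg (sq_nonneg _)]
      have := abs_le.1 (m.abs_interp_sub_le h0 hu hiN ht)
      exact sq_le_sq' this.1 this.2
  refine (le_abs_self _).trans (h1.trans ?_)
  rw [← h, abs_of_pos hh]
  calc (m.h i * J) ^ 2 * m.h i = m.h i ^ 3 * J ^ 2 := by ring
    _ ≤ m.h i ^ 3 * (m.h i * Q) := by gcongr
    _ = m.h i ^ 4 * Q := by ring
    _ ≤ H ^ 4 * Q := by gcongr
    _ = (H ^ 2) ^ 2 * Q := by ring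

/-- Consistency of the interpolant: the bilinear form sees the interpolation error only
through its `L²` norm. -/
lemma abs_B_interp_sub_le {P : Coeffs} {f : ℝ → ℝ} {M : ℝ} (hM : P.BoundedBy f M) {u : H1}
    (h0 : u.val 0 = 0) (ω : ℕ → ℝ) :
    |P.B (m.toH1 (m.interpSlope u.val)) (m.toH1 ω) - P.B u (m.toH1 ω)|
      ≤ 4 * M * L2 (fun t => (m.toH1 (m.interpSlope u.val)).val t - u.val t)
        * L2 (m.pc ω) := by
  set uI := m.toH1 (m.interpSlope u.val) with huI
  set w := m.toH1 ω with hw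
  set e := fun t => uI.val t - u.val t with he
  set e' := fun t => uI.dval t - u.dval t with he'
  have heP : IsPrim e e' := uI.isPrim.sub u.isPrim
  have hnode : ∀ j ≤ N, e (m.x j) = 0 := fun j hj => by
    simp only [he, huI, m.interp_node h0 hj, sub_self]
  have he1 : e 1 = 0 := m.x_last ▸ hnode N le_rfl
  have hpa : ∫ t, (P.a' t * e t + P.a t * e' t) * m.pc ω t ∂unitMeas = 0 := by
    rw [m.integral_mul_pc (P.isPrim_a.mul heP)]
    refine Finset.sum_eq_zero fun i hi => ?_
    have hiN := Finset.mem_range.1 hi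
    rw [hnode i hiN.le, hnode (i+1) hiN]; ring
  have hbP := (P.isPrim_b.mul w.isPrim).mul heP
  have hpb := hbP.integral_eq (α := 0) (β := 1) (by simp) (by simp)
  have hw0 : w.val 0 = 0 := m.toH1_val_zero ω
  rw [he1, hw0, integral_unit] at hpb
  have hbI := intervalIntegrable_unit.1 hbP.1
  have hemem : MemLp e ⊤ unitMeas := heP.memLp_top
  have hemem' : MemLp e' 2 unitMeas := uI.memLp_dval.sub u.memLp_dval
  have haI : Integrable (fun t => (P.a' t * e t + P.a t * e' t) * m.pc ω t) unitMeas :=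
    integrable_mul_of_memLp_two ((memLp_two_of_top (MemLp.top_mul P.memLp_a' hemem)).add
      (MemLp.top_mul P.memLp_a hemem')) (m.memLp_pc ω)
  have hD : Integrable (fun t =>
      (P.a t * uI.dval t * w.dval t + P.b t * uI.dval t * w.val t + P.c t * uI.val t * w.val t)
      - (P.a t * u.dval t * w.dval t + P.b t * u.dval t * w.val t + P.c t * u.val t * w.val t))
      unitMeas := (P.integrable_B uI w).sub (P.integrable_B u w)
  have hDa : Integrable (fun t =>
      (P.a t * uI.dval t * w.dval t + P.b t * uI.dval t * w.val t + P.c t * uI.val t * w.val t)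
      - (P.a t * u.dval t * w.dval t + P.b t * u.dval t * w.val t + P.c t * u.val t * w.val t)
      - (P.a' t * e t + P.a t * e' t) * m.pc ω t) unitMeas := hD.sub haI
  have hid : P.B uI w - P.B u w = ∫ t, (P.c t * e t * w.val t - P.a' t * e t * w.dval t
      - (P.b' t * w.val t + P.b t * w.dval t) * e t) ∂unitMeas := by
    rw [← sub_zero (P.B uI w - P.B u w), ← hpa,
      ← sub_zero (P.B uI w - P.B u w - _), ← sub_self (P.b 1 * w.val 1 * 0 : ℝ)]
    nth_rewrite 2 [show P.b 1 * w.val 1 * 0 = P.b 0 * 0 * e 0 by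
      rw [show e 0 = 0 from m.x_zero ▸ hnode 0 (Nat.zero_le N)]; ring]
    rw [← hpb, Coeffs.B, Coeffs.B, integral_unit, integral_unit,
      ← integral_sub (P.integrable_B uI w) (P.integrable_B u w),
      ← integral_sub hD haI, ← integral_sub hDa hbI]
    refine integral_congr_ae (Filter.Eventually.of_forall fun t => ?_)
    simp only [he, he', hw, toH1_dval]
    ring
  have hL2e := L2_nonneg e
  have hI1 : Integrable (fun t => |e t| * |w.dval t|) unitMeas :=
    integrable_mul_of_memLp_two (memLp_two_of_top hemem).abs w.memLp_dval.abs
  have hI2 : Integrable (fun t => |e t| * L2 w.dval) unitMeas :=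
    (integrable_of_memLp_two (memLp_two_of_top hemem)).abs.mul_const _
  rw [hid]
  refine abs_integral_le_integral_abs.trans ((integral_mono_of_nonneg
    (g := fun t => 2 * M * (|e t| * |w.dval t|) + 2 * M * (|e t| * L2 w.dval))
    (Filter.Eventually.of_forall fun _ => abs_nonneg _)
    ((hI1.const_mul _).add (hI2.const_mul _)) ?_).trans ?_)
  · filter_upwards [hM.ae_le, ae_unit_of_forall fun t ht =>
      w.abs_val_le hw0 (Set.Ioc_subset_Icc_self ht)] with t ht hwt
    obtain ⟨-, hb, hc, ha', hb', -⟩ := ht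
    have hM0 := hM.nonneg
    have t1 : |P.c t * e t * w.val t| ≤ M * (|e t| * L2 w.dval) := by
      rw [abs_mul, abs_mul, mul_assoc]; gcongr
    have t2 : |P.a' t * e t * w.dval t| ≤ M * (|e t| * |w.dval t|) := by
      rw [abs_mul, abs_mul, mul_assoc]; gcongr
    have t3 : |P.b' t * w.val t * e t| ≤ M * (|e t| * L2 w.dval) := by
      rw [abs_mul, abs_mul, mul_assoc, mul_comm |w.val t|]; gcongr
    have t4 : |P.b t * w.dval t * e t| ≤ M * (|e t| * |w.dval t|) := by
      rw [abs_mul, abs_mul, mul_assoc, mul_comm |w.dval t|]; gcongr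
    rw [abs_le] at *
    constructor <;> linarith [t1.1, t1.2, t2.1, t2.2, t3.1, t3.2, t4.1, t4.2]
  · rw [integral_add (hI1.const_mul _) (hI2.const_mul _), integral_const_mul, integral_const_mul,
      integral_mul_const, ← L1_def]
    have hM0 := hM.nonneg
    have t1 := integral_abs_mul_abs_le_L2 (memLp_two_of_top hemem) w.memLp_dval
    have t2 := mul_le_mul_of_nonneg_right (L1_le_L2 (memLp_two_of_top hemem))
      (L2_nonneg w.dval)
    calc _ ≤ 2 * M * (L2 e * L2 w.dval) + 2 * M * (L2 e * L2 w.dval) := by gcongr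
      _ = _ := by rw [hw, toH1_dval]; ring

/-- Optimal order `L²` error estimate for the finite element solution. -/
lemma L2_error_le {P : Coeffs} {f : ℝ → ℝ} {M : ℝ} (hM : P.BoundedBy f M) {u : H1}
    (hu : P.IsWeakSolution f u) {u'' : ℝ → ℝ} (huP : IsPrim u.dval u'')
    (hu2 : MemLp u'' 2 unitMeas) {H : ℝ} (hH : ∀ i < N, m.h i ≤ H) {σ : ℕ → ℝ}
    (hσ : P.IsFESolution f m (m.toH1 σ)) :
    L2 (fun t => (m.toH1 σ).val t - u.val t) ≤ (4 * M / P.a0 + 1) * (H ^ 2 * L2 u'') := by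
  set τ := m.interpSlope u.val with hτ
  set e := fun t => (m.toH1 τ).val t - u.val t with he
  set w := m.toH1 (fun i => σ i - τ i) with hw
  have hM0 := hM.nonneg
  have ha0 := P.a0_pos
  have he2 := m.L2_interp_sub_le hu.1 huP hu2 hH
  have hw0 : w.val 0 = 0 := m.toH1_val_zero _
  have hwv : ∀ x ∈ Set.Icc (0:ℝ) 1, w.val x = (m.toH1 σ).val x - (m.toH1 τ).val x :=
    fun x hx => m.toH1_val_sub σ τ hx
  have hτ1 : (m.toH1 τ).val 1 = 0 := by
    have := m.interp_node hu.1 (le_refl N)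
    rw [m.x_last, hu.2.1] at this
    exact this
  have hw1 : w.val 1 = 0 := by rw [hwv 1 (by simp), hσ.2.1, hτ1, sub_zero]
  have hB : P.B w w = -(P.B (m.toH1 τ) w - P.B u w) := by
    rw [P.B_eq_sub w (ae_unit_of_forall fun t _ => m.pc_sub σ τ t)
      (ae_unit_of_forall fun t ht => hwv t (Set.Ioc_subset_Icc_self ht)),
      hσ.2.2.2 w hw0 hw1 (m.isPL_toH1 _), hu.2.2 w hw0 hw1]
    ring
  have hco := P.a0_mul_sq_le_B hw0 hw1
  have hcons := m.abs_B_interp_sub_le hM hu.1 (fun i => σ i - τ i)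
  have hwd : P.a0 * L2 w.dval ≤ 4 * M * L2 e := by
    have h1 : P.a0 * L2 w.dval ^ 2 ≤ 4 * M * L2 e * L2 w.dval := by
      refine hco.trans ?_
      rw [hB]
      exact (neg_le_abs _).trans hcons
    rcases (L2_nonneg w.dval).eq_or_lt with hz | hz
    · rw [← hz, mul_zero]; exact mul_nonneg (by linarith) (L2_nonneg _)
    · exact le_of_mul_le_mul_right (by linarith) hz
  have hwL2 : L2 w.val ≤ 4 * M / P.a0 * L2 e := by
    refine (L2_le_of_abs_le fun t ht => w.abs_val_le hw0 (Set.Ioc_subset_Icc_self ht)).trans ?_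
    rw [div_mul_eq_mul_div, le_div_iff₀ ha0]; linarith
  have hsum : L2 (fun t => (m.toH1 σ).val t - u.val t) = L2 (fun t => w.val t + e t) :=
    L2_congr (ae_unit_of_forall fun t ht => by
      show _ = w.val t + ((m.toH1 τ).val t - u.val t)
      rw [hwv t (Set.Ioc_subset_Icc_self ht)]; ring)
  rw [hsum]
  refine (L2_add_le (memLp_two_of_top w.memLp_val) (memLp_two_of_top
    ((m.toH1 τ).memLp_val.sub u.memLp_val))).trans ?_
  calc L2 w.val + L2 e ≤ (4 * M / P.a0 + 1) * L2 e := by linarith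
    _ ≤ _ := by gcongr

end Mesh

lemma abs_indicator_Ioc_sub_le {a b c d : ℝ} (t : ℝ) :
    |(Set.Ioc a b).indicator (fun _ => (1:ℝ)) t - (Set.Ioc c d).indicator (fun _ => (1:ℝ)) t|
      ≤ (Set.uIoc a c).indicator (fun _ => (1:ℝ)) t
        + (Set.uIoc b d).indicator (fun _ => (1:ℝ)) t := by
  classical
  simp only [Set.indicator_apply, Set.mem_uIoc, Set.mem_Ioc]
  split_ifs <;> norm_num <;> grind

lemma integrable_indicator_unit {s : Set ℝ} (hs : MeasurableSet s) :
    Integrable (s.indicator fun _ => (1:ℝ)) unitMeas :=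
  (integrable_const (1:ℝ)).indicator hs

lemma integral_indicator_uIoc_le (a c : ℝ) :
    ∫ t, (Set.uIoc a c).indicator (fun _ => (1:ℝ)) t ∂unitMeas ≤ |a - c| := by
  rw [integral_indicator measurableSet_uIoc, setIntegral_const, smul_eq_mul, mul_one,
    Measure.real, abs_sub_comm, ← ENNReal.toReal_ofReal (abs_nonneg (c - a)), ← Real.volume_uIoc]
  exact ENNReal.toReal_mono (by simp) (Measure.restrict_apply_le _ _)

namespace Mesh

variable {N : ℕ} (m m' : Mesh N)

lemma toH1_congr {σ τ : ℕ → ℝ} (h : ∀ i < N, σ i = τ i) : m.toH1 σ = m.toH1 τ := by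
  have : m.pc σ = m.pc τ := funext fun t => Finset.sum_congr rfl fun i hi => by
    rw [h i (Finset.mem_range.1 hi)]
  simp only [toH1, this]

variable {m m'} {δ : ℝ}

/-- `L¹` distance between piecewise constant functions on two nearby meshes. -/
lemma L1_pc_sub_le (hδ : ∀ i ≤ N, |m.x i - m'.x i| ≤ δ) (α β : ℕ → ℝ) :
    L1 (fun t => m.pc α t - m'.pc β t)
      ≤ ∑ i ∈ Finset.range N, (2 * δ * |α i| + m'.h i * |α i - β i|) := by
  set I : ℕ → ℝ → ℝ := fun i t =>
    (Set.uIoc (m.x i) (m'.x i)).indicator (fun _ => (1:ℝ)) t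
      + (Set.uIoc (m.x (i+1)) (m'.x (i+1))).indicator (fun _ => (1:ℝ)) t with hI
  have hIi : ∀ i, Integrable (I i) unitMeas := fun i =>
    (integrable_indicator_unit measurableSet_uIoc).add
      (integrable_indicator_unit measurableSet_uIoc)
  have hIle : ∀ i < N, ∫ t, I i t ∂unitMeas ≤ 2 * δ := fun i hi => by
    rw [integral_add (integrable_indicator_unit measurableSet_uIoc)
      (integrable_indicator_unit measurableSet_uIoc)]
    linarith [integral_indicator_uIoc_le (m.x i) (m'.x i), hδ i hi.le,
      integral_indicator_uIoc_le (m.x (i+1)) (m'.x (i+1)), hδ (i+1) hi]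
  have hS : Integrable (fun t => ∑ i ∈ Finset.range N, |α i| * I i t) unitMeas :=
    integrable_finsetSum _ fun i _ => (hIi i).const_mul _
  have hA : Integrable (fun t => |m'.pc (fun i => α i - β i) t|) unitMeas :=
    ((m'.memLp_pc _).integrable le_rfl).abs
  have hpt : ∀ t, |m.pc α t - m'.pc β t|
      ≤ (∑ i ∈ Finset.range N, |α i| * I i t) + |m'.pc (fun i => α i - β i) t| := fun t => by
    have h1 : m.pc α t - m'.pc β t = (m.pc α t - m'.pc α t) + m'.pc (fun i => α i - β i) t := by
      rw [m'.pc_sub]; ring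
    rw [h1]
    refine (abs_add_le _ _).trans (add_le_add_left ?_ _)
    rw [pc, pc, ← Finset.sum_sub_distrib]
    refine (Finset.abs_sum_le_sum_abs _ _).trans (Finset.sum_le_sum fun i _ => ?_)
    rw [← mul_sub, abs_mul]
    exact mul_le_mul_of_nonneg_left (abs_indicator_Ioc_sub_le t) (abs_nonneg _)
  rw [L1_def]
  refine (integral_mono_of_nonneg (Filter.Eventually.of_forall fun _ => abs_nonneg _)
    (hS.add hA) (Filter.Eventually.of_forall hpt)).trans ?_
  rw [integral_add' hS hA, integral_finsetSum _ fun i _ => (hIi i).const_mul _, ← L1_def,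
    m'.L1_pc, Finset.sum_add_distrib]
  refine add_le_add_left (Finset.sum_le_sum fun i hi => ?_) _
  rw [integral_const_mul, mul_comm]
  exact mul_le_mul_of_nonneg_right (hIle i (Finset.mem_range.1 hi)) (abs_nonneg _)

lemma L1_pc_sub_mul_le (hδ : ∀ i ≤ N, |m.x i - m'.x i| ≤ δ) {R : ℝ}
    (hR : ∀ i < N, 1 ≤ R * m.h i) {q : ℕ → ℝ} {c : ℝ} (hc : 0 ≤ c)
    (hq : ∀ i < N, m'.h i * |1 - q i| ≤ c * δ) (α : ℕ → ℝ) :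
    L1 (fun t => m.pc α t - m'.pc (fun i => q i * α i) t)
      ≤ (2 + c) * δ * R * L1 (m.pc α) := by
  refine (L1_pc_sub_le hδ _ _).trans ?_
  rw [m.L1_pc, Finset.mul_sum]
  refine Finset.sum_le_sum fun i hi => ?_
  have hiN := Finset.mem_range.1 hi
  have hδ0 : 0 ≤ δ := (abs_nonneg _).trans (hδ 0 (Nat.zero_le N))
  have h1 : |α i - q i * α i| = |1 - q i| * |α i| := by rw [← abs_mul]; congr 1; ring
  have h2 := mul_le_mul_of_nonneg_right (hq i hiN) (abs_nonneg (α i))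
  have h3 := mul_le_mul_of_nonneg_left (hR i hiN)
    (show 0 ≤ (2 + c) * δ * |α i| by positivity)
  rw [h1]
  linarith

end Mesh

/-- Stability of the bilinear form under perturbations of its arguments that are small in
`W^{1,1}` only. -/
lemma Coeffs.abs_B_sub_le {P : Coeffs} {f : ℝ → ℝ} {M : ℝ} (hM : P.BoundedBy f M)
    {V W z w : H1} (hV0 : V.val 0 = 0) (hW0 : W.val 0 = 0) (hz0 : z.val 0 = 0)
    (hw0 : w.val 0 = 0) {A D ε κ : ℝ} (hε : 0 ≤ ε) (hz : L1 z.dval ≤ A) (hW : L1 W.dval ≤ D)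
    (hzV : L1 (fun t => z.dval t - V.dval t) ≤ ε * A)
    (hwW : L1 (fun t => w.dval t - W.dval t) ≤ ε * D)
    (hzw : L1 (fun t => z.dval t * w.dval t - V.dval t * W.dval t) ≤ κ * ε * (A * D)) :
    |P.B V W - P.B z w| ≤ M * (κ + 4) * ε * (A * D) := by
  have hM0 := hM.nonneg
  have hA0 : 0 ≤ A := (L1_nonneg _).trans hz
  have hD0 : 0 ≤ D := (L1_nonneg _).trans hW
  have hi1 : Integrable (fun t => |z.dval t * w.dval t - V.dval t * W.dval t|) unitMeas :=
    ((integrable_mul_of_memLp_two z.memLp_dval w.memLp_dval).sub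
      (integrable_mul_of_memLp_two V.memLp_dval W.memLp_dval)).abs
  have hi2 : Integrable (fun t => |z.dval t - V.dval t|) unitMeas :=
    (integrable_of_memLp_two (z.memLp_dval.sub V.memLp_dval)).abs
  have hi3 : Integrable (fun t => |z.dval t|) unitMeas :=
    (integrable_of_memLp_two z.memLp_dval).abs
  have hi4 : Integrable (fun _ : ℝ => 2 * M * (ε * A * D)) unitMeas := integrable_const _
  have hi12 : Integrable (fun t => M * |z.dval t * w.dval t - V.dval t * W.dval t|
      + M * D * |z.dval t - V.dval t|) unitMeas := (hi1.const_mul _).add (hi2.const_mul _)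
  have hi123 : Integrable (fun t => M * |z.dval t * w.dval t - V.dval t * W.dval t|
      + M * D * |z.dval t - V.dval t| + M * (ε * D) * |z.dval t|) unitMeas :=
    hi12.add (hi3.const_mul _)
  rw [B, B, integral_unit, integral_unit,
    ← integral_sub (P.integrable_B V W) (P.integrable_B z w)]
  refine abs_integral_le_integral_abs.trans ((integral_mono_of_nonneg
    (g := fun t => M * |z.dval t * w.dval t - V.dval t * W.dval t|
      + M * D * |z.dval t - V.dval t| + M * (ε * D) * |z.dval t| + 2 * M * (ε * A * D))
    (Filter.Eventually.of_forall fun _ => abs_nonneg _) (hi123.add hi4) ?_).trans ?_)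
  · filter_upwards [hM.ae_le, ae_unit_of_forall fun t ht => Set.Ioc_subset_Icc_self ht]
      with t hb ht
    obtain ⟨ha, hb, hc, -⟩ := hb
    have eW := (W.isPrim.abs_le_L1 hW0 ht).trans hW
    have ez := (z.isPrim.abs_le_L1 hz0 ht).trans hz
    have ezV := ((z.isPrim.sub V.isPrim).abs_le_L1 (by simp [hz0, hV0]) ht).trans hzV
    have ewW := ((w.isPrim.sub W.isPrim).abs_le_L1 (by simp [hw0, hW0]) ht).trans hwW
    have t1 : |P.a t * (z.dval t * w.dval t - V.dval t * W.dval t)|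
        ≤ M * |z.dval t * w.dval t - V.dval t * W.dval t| := by
      rw [abs_mul]; gcongr
    have t2 : |P.b t * (z.dval t - V.dval t) * W.val t| ≤ M * |z.dval t - V.dval t| * D := by
      rw [abs_mul, abs_mul]; gcongr
    have t3 : |P.b t * z.dval t * (w.val t - W.val t)| ≤ M * |z.dval t| * (ε * D) := by
      rw [abs_mul, abs_mul]; gcongr
    have t4 : |P.c t * (z.val t - V.val t) * W.val t| ≤ M * (ε * A) * D := by
      rw [abs_mul, abs_mul]; gcongr
    have t5 : |P.c t * z.val t * (w.val t - W.val t)| ≤ M * A * (ε * D) := by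
      rw [abs_mul, abs_mul]; gcongr
    rw [abs_le] at t1 t2 t3 t4 t5 ⊢
    constructor <;> linarith [t1.1, t1.2, t2.1, t2.2, t3.1, t3.2, t4.1, t4.2, t5.1, t5.2]
  · rw [integral_add hi123 hi4, integral_add hi12 (hi3.const_mul _),
      integral_add (hi1.const_mul _) (hi2.const_mul _), integral_const_mul, integral_const_mul,
      integral_const_mul, ← L1_def, ← L1_def, ← L1_def, integral_const]
    simp only [measureReal_restrict_apply_univ, Real.volume_real_Ioc, smul_eq_mul]
    calc _ ≤ M * (κ * ε * (A * D)) + M * D * (ε * A) + M * (ε * D) * A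
          + max (1 - 0) 0 * (2 * M * (ε * A * D)) := by gcongr
      _ = _ := by norm_num; ring

namespace Mesh

variable {N : ℕ} {m m' : Mesh N} {δ : ℝ}

/-- Lipschitz dependence of the finite element solution on the mesh in `W^{1,1}`. -/
lemma L1_dval_sub_le {P : Coeffs} {f : ℝ → ℝ} {M : ℝ} (hM : P.BoundedBy f M) (hf : MemL2 f)
    {ρ0 : ℝ} (hρ : 1 ≤ ρ0) (hm : m.InS ρ0) (hm' : m'.InS ρ0)
    (hδ : ∀ i ≤ N, |m.x i - m'.x i| ≤ δ) {s t : ℕ → ℝ}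
    (hU : P.IsFESolution f m (m.toH1 s)) (hV : P.IsFESolution f m' (m'.toH1 t)) :
    L1 (fun x => m.pc s x - m'.pc t x)
      ≤ 4 * ρ0 * (M * (1 + (ρ0 + 5) * (2 * ρ0 * M / P.a0)) / P.a0 + 2 * ρ0 * M / P.a0)
        * N * δ := by
  have hN : (0:ℝ) < N := Nat.cast_pos.2 m.N_pos
  have hρ0 : 0 < ρ0 := by linarith
  have ha0 := P.a0_pos
  have hM0 := hM.nonneg
  have hδ0 : 0 ≤ δ := (abs_nonneg _).trans (hδ 0 (Nat.zero_le N))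
  have hRm : ∀ i < N, 1 ≤ ρ0 * N * m.h i := fun i hi => by
    have := (hm i hi).1
    rwa [div_le_iff₀' (by positivity)] at this
  have hRm' : ∀ i < N, 1 ≤ ρ0 * N * m'.h i := fun i hi => by
    have := (hm' i hi).1
    rwa [div_le_iff₀' (by positivity)] at this
  have hN2 : ∀ i < N, N * m.h i ≤ 2 := fun i hi => by
    have := (hm i hi).2
    rwa [le_div_iff₀' hN] at this
  have hN2' : ∀ i < N, N * m'.h i ≤ 2 := fun i hi => by
    have := (hm' i hi).2
    rwa [le_div_iff₀' hN] at this
  have hhk : ∀ i < N, m.h i ≤ 2 * ρ0 * m'.h i := fun i hi => by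
    have h1 := mul_le_mul_of_nonneg_left (hRm' i hi) (m.h_pos hi).le
    have h2 := mul_le_mul_of_nonneg_left (hN2 i hi) (mul_nonneg hρ0.le (m'.h_pos hi).le)
    linarith
  have hkh : ∀ i < N, m'.h i ≤ 2 * ρ0 * m.h i := fun i hi => by
    have h1 := mul_le_mul_of_nonneg_left (hRm i hi) (m'.h_pos hi).le
    have h2 := mul_le_mul_of_nonneg_left (hN2' i hi) (mul_nonneg hρ0.le (m.h_pos hi).le)
    linarith
  have hdiff : ∀ i < N, |m'.h i - m.h i| ≤ 2 * δ := fun i hi => by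
    have h1 := abs_le.1 (hδ i hi.le)
    have h2 := abs_le.1 (hδ (i+1) hi)
    rw [abs_le, h, h]
    constructor <;> linarith [h1.1, h1.2, h2.1, h2.2]
  set r : ℕ → ℝ := fun i => m.h i / m'.h i with hr
  have hkr : ∀ i < N, m'.h i * r i = m.h i := fun i hi => mul_div_cancel₀ _ (m'.h_pos hi).ne'
  have hr0 : ∀ i < N, 0 < r i := fun i hi => div_pos (m.h_pos hi) (m'.h_pos hi)
  have hr2 : ∀ i < N, r i ≤ 2 * ρ0 := fun i hi => (div_le_iff₀ (m'.h_pos hi)).2 (hhk i hi)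
  have hq1 : ∀ i < N, m'.h i * |1 - r i| ≤ 2 * δ := fun i hi => by
    calc m'.h i * |1 - r i| = |m'.h i * (1 - r i)| := by
          rw [abs_mul, abs_of_pos (m'.h_pos hi)]
      _ ≤ 2 * δ := by rw [mul_sub, hkr i hi, mul_one]; exact hdiff i hi
  have hq2 : ∀ i < N, m'.h i * |1 - r i ^ 2| ≤ (2 + 4 * ρ0) * δ := fun i hi => by
    have h1 : |1 - r i ^ 2| = |1 - r i| * (1 + r i) := by
      rw [show 1 - r i ^ 2 = (1 - r i) * (1 + r i) by ring, abs_mul,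
        abs_of_pos (show 0 < 1 + r i by linarith [hr0 i hi])]
    rw [h1, ← mul_assoc]
    calc _ ≤ 2 * δ * (1 + 2 * ρ0) :=
          mul_le_mul (hq1 i hi) (by linarith [hr2 i hi]) (by linarith [hr0 i hi]) (by linarith)
      _ = _ := by ring
  set ε := 4 * ρ0 * N * δ with hε
  have hε0 : 0 ≤ ε := by positivity
  have hL1 : ∀ α : ℕ → ℝ, L1 (fun x => m.pc α x - m'.pc (fun i => r i * α i) x)
      ≤ ε * L2 (m.pc α) := fun α => by
    have h1 := mul_le_mul_of_nonneg_left (L1_le_L2 (m.memLp_pc α)) hε0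
    have h2 := L1_pc_sub_mul_le hδ hRm zero_le_two hq1 α
    refine h2.trans (le_trans (le_of_eq ?_) h1)
    rw [hε]; ring
  have hL1r : ∀ α : ℕ → ℝ, L1 (m'.pc fun i => r i * α i) ≤ L2 (m.pc α) := fun α => by
    refine le_trans (le_of_eq ?_) (L1_le_L2 (m.memLp_pc α))
    rw [m.L1_pc, m'.L1_pc]
    refine Finset.sum_congr rfl fun i hi => ?_
    have hiN := Finset.mem_range.1 hi
    rw [abs_mul, abs_of_pos (hr0 i hiN), ← mul_assoc, hkr i hiN]
  set ζ : ℕ → ℝ := fun i => t i * m'.h i / m.h i with hζ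
  have hrζ : ∀ i < N, r i * ζ i = t i := fun i hi => by
    have := (m.h_pos hi).ne'
    have := (m'.h_pos hi).ne'
    simp only [hr, hζ]; field_simp
  have hVeq := m'.toH1_congr hrζ
  have hpcV : m'.pc (fun i => r i * ζ i) = m'.pc t := congrArg H1.dval hVeq
  set ω : ℕ → ℝ := fun i => s i - ζ i with hω
  set A := L2 (m.pc ζ) with hA
  set D := L2 (m.pc ω) with hD
  have hA0 : 0 ≤ A := L2_nonneg _
  have hD0 : 0 ≤ D := L2_nonneg _
  have hAV : A ≤ 2 * ρ0 * L2 (m'.pc t) := by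
    refine abs_le_of_sq_le_sq' ?_ (mul_nonneg (by linarith) (L2_nonneg _)) |>.2
    rw [mul_pow, hA, m.L2_sq_pc, m'.L2_sq_pc, Finset.mul_sum]
    refine Finset.sum_le_sum fun i hi => ?_
    have hiN := Finset.mem_range.1 hi
    have hh := m.h_pos hiN
    have hk := m'.h_pos hiN
    have h1 : m.h i * ζ i ^ 2 = m'.h i / m.h i * (m'.h i * t i ^ 2) := by
      simp only [hζ]; field_simp
    rw [h1]
    refine mul_le_mul_of_nonneg_right ?_ (by positivity)
    rw [div_le_iff₀ hh]
    refine (hkh i hiN).trans (mul_le_mul_of_nonneg_right ?_ hh.le)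
    nlinarith
  have hVM : P.a0 * L2 (m'.pc t) ≤ M :=
    Coeffs.a0_mul_L2_le hM hV.1 hV.2.1 (hV.2.2.2 _ hV.1 hV.2.1 hV.2.2.1)
  have hAK : A ≤ 2 * ρ0 * M / P.a0 := by
    rw [le_div_iff₀ ha0]
    nlinarith
  set w := m.toH1 ω with hw
  set W := m'.toH1 (fun i => r i * ω i) with hW
  have hw0 : w.val 0 = 0 := m.toH1_val_zero _
  have hW0 : W.val 0 = 0 := m'.toH1_val_zero _
  have hw1 : w.val 1 = 0 := by
    have h1 := hU.2.1
    have h2 := hV.2.1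
    rw [toH1_val_one] at h1 h2
    rw [hw, toH1_val_one, Finset.sum_congr rfl (fun i _ => mul_sub (m.h i) (s i) (ζ i)),
      Finset.sum_sub_distrib, h1, zero_sub, neg_eq_zero, ← h2]
    refine Finset.sum_congr rfl fun i hi => ?_
    have hiN := Finset.mem_range.1 hi
    rw [← hkr i hiN, mul_assoc, hrζ i hiN]
  have hW1 : W.val 1 = 0 := by
    rw [← hw1, hw, hW, toH1_val_one, toH1_val_one]
    refine Finset.sum_congr rfl fun i hi => ?_
    rw [← mul_assoc, hkr i (Finset.mem_range.1 hi)]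
  have hzw : L1 (fun x => m.pc ζ x * m.pc ω x - m'.pc t x * m'.pc (fun i => r i * ω i) x)
      ≤ (1 + ρ0) * ε * (A * D) := by
    have h1 := L1_pc_sub_mul_le hδ hRm (by positivity) hq2 (fun i => ζ i * ω i)
    have h2 := mul_le_mul_of_nonneg_left (m.L1_pc_mul_le ζ ω)
      (show 0 ≤ (1 + ρ0) * ε by positivity)
    refine le_trans (le_of_eq (L1_congr (ae_unit_of_forall fun x hx => ?_)))
      (h1.trans (le_trans (le_of_eq ?_) h2))
    · obtain ⟨i, -, hi⟩ := m.exists_pc_eq hx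
      obtain ⟨j, -, hj⟩ := m'.exists_pc_eq hx
      rw [← hpcV]
      simp only [hi, hj]; ring
    · rw [hε]; ring
  have hzV := hL1 ζ
  rw [hpcV] at hzV
  have hBd := Coeffs.abs_B_sub_le hM (V := m'.toH1 t) (W := W) (z := m.toH1 ζ) (w := w)
    (A := A) (D := D)
    (m'.toH1_val_zero _) hW0 (m.toH1_val_zero _) hw0 hε0 (L1_le_L2 (m.memLp_pc ζ)) (hL1r ω)
    hzV (hL1 ω) hzw
  have hip : |ip f w - ip f W| ≤ M * (ε * D) := by
    refine (abs_ip_sub_le hM hf w W).trans (mul_le_mul_of_nonneg_left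
      (L2_le_of_abs_le fun x hx => ?_) hM0)
    exact ((w.isPrim.sub W.isPrim).abs_le_L1 (by simp [hw0, hW0])
      (Set.Ioc_subset_Icc_self hx)).trans (hL1 ω)
  have hB : P.B w w = (ip f w - ip f W) + (P.B (m'.toH1 t) W - P.B (m.toH1 ζ) w) := by
    rw [P.B_eq_sub w (ae_unit_of_forall fun x _ => m.pc_sub s ζ x)
      (ae_unit_of_forall fun x hx => m.toH1_val_sub s ζ (Set.Ioc_subset_Icc_self hx)),
      hU.2.2.2 w hw0 hw1 (m.isPL_toH1 _), hV.2.2.2 W hW0 hW1 (m'.isPL_toH1 _)]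
    ring
  have hDle : D ≤ M * (1 + (ρ0 + 5) * (2 * ρ0 * M / P.a0)) / P.a0 * ε := by
    have hco := P.a0_mul_sq_le_B hw0 hw1
    rw [hB] at hco
    have h1 : P.a0 * D ^ 2 ≤ M * (1 + (ρ0 + 5) * A) * ε * D := by
      refine hco.trans ?_
      linarith [le_abs_self (ip f w - ip f W),
        le_abs_self (P.B (m'.toH1 t) W - P.B (m.toH1 ζ) w)]
    have h2 : P.a0 * D ≤ M * (1 + (ρ0 + 5) * A) * ε := by
      rcases hD0.eq_or_lt with hz | hz
      · rw [← hz, mul_zero]; positivity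
      · exact le_of_mul_le_mul_right (by linarith) hz
    have h3 : M * (1 + (ρ0 + 5) * A) * ε ≤ M * (1 + (ρ0 + 5) * (2 * ρ0 * M / P.a0)) * ε := by
      gcongr
    rw [div_mul_eq_mul_div, le_div_iff₀ ha0]
    linarith
  have htri : L1 (fun x => m.pc s x - m'.pc t x)
      ≤ L1 (m.pc ω) + L1 (fun x => m.pc ζ x - m'.pc t x) := by
    have i1 : Integrable (fun x => |m.pc ω x|) unitMeas :=
      ((m.memLp_pc ω).integrable le_rfl).abs
    have i2 : Integrable (fun x => |m.pc ζ x - m'.pc t x|) unitMeas :=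
      (((m.memLp_pc ζ).integrable le_rfl).sub ((m'.memLp_pc t).integrable le_rfl)).abs
    rw [L1_def, L1_def, L1_def, ← integral_add i1 i2]
    refine integral_mono_of_nonneg (Filter.Eventually.of_forall fun _ => abs_nonneg _)
      (i1.add i2) (Filter.Eventually.of_forall fun x => ?_)
    have h1 : m.pc s x - m'.pc t x = m.pc ω x + (m.pc ζ x - m'.pc t x) := by
      rw [hω, m.pc_sub]; ring
    simp only [h1]
    exact abs_add_le _ _
  refine htri.trans ?_
  calc L1 (m.pc ω) + L1 (fun x => m.pc ζ x - m'.pc t x)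
      ≤ M * (1 + (ρ0 + 5) * (2 * ρ0 * M / P.a0)) / P.a0 * ε + ε * (2 * ρ0 * M / P.a0) :=
        add_le_add ((L1_le_L2 (m.memLp_pc ω)).trans hDle)
          (hzV.trans (mul_le_mul_of_nonneg_left hAK hε0))
    _ = _ := by rw [hε]; ring

end Mesh

lemma abs_node_sub_le_meshDist {N : ℕ} (m m' : Mesh N) {i : ℕ} (hi : i ≤ N) :
    |m.x i - m'.x i| ≤ meshDist m m' :=
  Finset.le_sup' (fun i => |m.x i - m'.x i|) (Finset.mem_range.2 (Nat.lt_succ_of_le hi))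

lemma Coeffs.IsFESolution.exists_slopes {P : Coeffs} {f : ℝ → ℝ} {N : ℕ} {m : Mesh N} {uh : H1}
    (h : P.IsFESolution f m uh) :
    ∃ σ : ℕ → ℝ, uh.dval =ᵐ[unitMeas] m.pc σ ∧
      (∀ x ∈ Set.Icc (0:ℝ) 1, uh.val x = (m.toH1 σ).val x) ∧ P.IsFESolution f m (m.toH1 σ) := by
  obtain ⟨σ, hd, hv⟩ := m.exists_slopes h.2.2.1 h.1
  refine ⟨σ, hd, hv, m.toH1_val_zero σ, ?_, m.isPL_toH1 σ, fun v h0 h1 hP => ?_⟩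
  · rw [← hv 1 (by simp), h.2.1]
  · rw [← h.2.2.2 v h0 h1 hP, P.B_congr v hd
      (ae_unit_of_forall fun t ht => hv t (Set.Ioc_subset_Icc_self ht))]

lemma Coeffs.IsFESolution.energySq_eq {P : Coeffs} {f : ℝ → ℝ} {N : ℕ} {m : Mesh N} {uh : H1}
    (h : P.IsFESolution f m uh) : P.energySq uh = ip f uh := by
  rw [← P.B_self h.1 h.2.1, h.2.2.2 uh h.1 h.2.1 h.2.2.1]

/-- continuous dependence of the finite element solution on the mesh
(Theorem 2.3). -/
theorem statement4 (P : Coeffs) (f : ℝ → ℝ) (hf2 : MemL2 f) (hfinf : MemLinf f)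
    (u : H1) (hu : P.IsWeakSolution f u) (hu2 : u.IsH2)
    (ρ0 : ℝ) (hρ0 : 1 ≤ ρ0) :
    ∃ C : ℝ, 0 < C ∧
      ∀ (N : ℕ) (m m' : Mesh N), m.InS ρ0 → m'.InS ρ0 →
        meshDist m m' < 1 / (ρ0 * (N:ℝ)) →
        ∀ uh uh' : H1, P.IsFESolution f m uh → P.IsFESolution f m' uh' →
          L1 (fun t => uh.dval t - uh'.dval t) ≤ C * (N:ℝ) * meshDist m m' ∧
          L2 (fun t => uh.val t - uh'.val t)
            ≤ C * (N:ℝ) ^ (-(1:ℝ)/2) * (meshDist m m') ^ ((1:ℝ)/2) ∧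
          |P.energySq uh - P.energySq uh'|
            ≤ C * (N:ℝ) ^ (-(1:ℝ)/2) * (meshDist m m') ^ ((1:ℝ)/2) := by
  obtain ⟨M, hM⟩ := P.exists_boundedBy hfinf
  obtain ⟨u'', hum, hui, hus, huf⟩ := hu2
  have huP : IsPrim u.dval u'' := ⟨hui, huf⟩
  have hu''2 : MemLp u'' 2 unitMeas :=
    (memLp_two_iff_integrable_sq hum.aestronglyMeasurable).2 (intervalIntegrable_unit.1 hus)
  have hM0 := hM.nonneg
  have ha0 := P.a0_pos
  have hρ : 0 < ρ0 := by linarith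
  set C₁ := 8 * ((4 * M / P.a0 + 1) * L2 u'') with hC₁
  set C₂ := 4 * ρ0 * (M * (1 + (ρ0 + 5) * (2 * ρ0 * M / P.a0)) / P.a0 + 2 * ρ0 * M / P.a0)
    with hC₂
  have hC₁0 : 0 ≤ C₁ := by have := L2_nonneg u''; positivity
  have hC₂0 : 0 ≤ C₂ := by positivity
  set S := √(C₁ * C₂) with hS
  have hS0 : 0 ≤ S := Real.sqrt_nonneg _
  have hMS : 0 ≤ M * S := mul_nonneg hM0 hS0
  refine ⟨C₂ + S + M * S + 1, by positivity, fun N m m' hm hm' _ uh uh' hh hh' => ?_⟩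
  set δ := meshDist m m' with hδ
  have hδi : ∀ i ≤ N, |m.x i - m'.x i| ≤ δ := fun i hi => abs_node_sub_le_meshDist m m' hi
  have hδ0 : 0 ≤ δ := (abs_nonneg _).trans (hδi 0 (Nat.zero_le N))
  have hN : (0:ℝ) < N := Nat.cast_pos.2 m.N_pos
  obtain ⟨s, hsd, hsv, hs⟩ := hh.exists_slopes
  obtain ⟨t, htd, htv, ht⟩ := hh'.exists_slopes
  have hL1 : L1 (fun x => uh.dval x - uh'.dval x) ≤ C₂ * N * δ := by
    rw [L1_congr (g' := fun x => m.pc s x - m'.pc t x)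
      (by filter_upwards [hsd, htd] with x h1 h2; rw [h1, h2])]
    exact Mesh.L1_dval_sub_le hM hf2 hρ0 hm hm' hδi hs ht
  have hsup : L2 (fun x => uh.val x - uh'.val x) ≤ C₂ * N * δ :=
    L2_le_of_abs_le fun x hx => ((uh.isPrim.sub uh'.isPrim).abs_le_L1
      (by rw [hh.1, hh'.1, sub_zero]) (Set.Ioc_subset_Icc_self hx)).trans hL1
  have hsuper : L2 (fun x => uh.val x - uh'.val x) ≤ C₁ * (1 / N ^ 2) := by
    have e1 := m.L2_error_le hM hu huP hu''2 (fun i hi => (hm i hi).2) hs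
    have e2 := m'.L2_error_le hM hu huP hu''2 (fun i hi => (hm' i hi).2) ht
    have e3 := L2_add_le (memLp_two_of_top ((m.toH1 s).memLp_val.sub u.memLp_val))
      (memLp_two_of_top (u.memLp_val.sub (m'.toH1 t).memLp_val))
    have e4 : L2 (u.val - (m'.toH1 t).val) = L2 (fun x => (m'.toH1 t).val x - u.val x) := by
      rw [L2, L2]
      refine congrArg _ (intervalIntegral.integral_congr fun x _ => ?_)
      simp only [Pi.sub_apply]; ring
    rw [e4] at e3
    have e5 : L2 (fun x => uh.val x - uh'.val x)
        = L2 (fun x => ((m.toH1 s).val - u.val) x + (u.val - (m'.toH1 t).val) x) :=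
      L2_congr (ae_unit_of_forall fun x hx => by
        have hx' := Set.Ioc_subset_Icc_self hx
        simp only [Pi.sub_apply, hsv x hx', htv x hx']; ring)
    rw [e5]
    refine e3.trans ((add_le_add e1 e2).trans (le_of_eq ?_))
    rw [hC₁]; field_simp; ring
  have hpow : (N:ℝ) ^ (-(1:ℝ)/2) * δ ^ ((1:ℝ)/2) = √(δ / N) := by
    rw [neg_div, Real.rpow_neg hN.le, ← Real.sqrt_eq_rpow, ← Real.sqrt_eq_rpow,
      Real.sqrt_div hδ0, inv_mul_eq_div]
  have hL2 : L2 (fun x => uh.val x - uh'.val x) ≤ S * √(δ / N) := by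
    rw [hS, ← Real.sqrt_mul (mul_nonneg hC₁0 hC₂0)]
    refine Real.le_sqrt_of_sq_le ?_
    calc L2 (fun x => uh.val x - uh'.val x) ^ 2
        ≤ C₁ * (1 / N ^ 2) * (C₂ * N * δ) := by
          rw [sq]
          exact mul_le_mul hsuper hsup (L2_nonneg _) (by positivity)
      _ = C₁ * C₂ * (δ / N) := by field_simp
  have hq0 := Real.sqrt_nonneg (δ / N)
  refine ⟨hL1.trans ?_, ?_, ?_⟩
  · gcongr; linarith
  · rw [mul_assoc, hpow]
    refine hL2.trans (mul_le_mul_of_nonneg_right ?_ hq0)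
    linarith
  · rw [mul_assoc, hpow, hh.energySq_eq, hh'.energySq_eq]
    refine (abs_ip_sub_le hM hf2 uh uh').trans ?_
    refine (mul_le_mul_of_nonneg_left hL2 hM0).trans ?_
    rw [← mul_assoc]
    exact mul_le_mul_of_nonneg_right (by linarith) hq0

end EquidMesh
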